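/- Let w, w′ ∈ Sₙ and k ≤ n with w →_{c[k,m]} w′, witnessed by a₁,b₁,…,a_m,b_m with aᵢ ≤ k < bᵢ, w′ = w·t_{a₁,b₁}⋯t_{a_m,b_m}, ℓ(w·t_{a₁,b₁}⋯t_{aᵢ,bᵢ}) = ℓ(w)+i for all i, and a₁,…,a_m distinct. For 1 ≤ j ≤ n−k set d_j = #{i : bᵢ = n+1−j}, μ′_j = d_{j+1} + ⋯ + d_{n−k}, and λ′_j = μ′_j + d_j (partitions with at most n−k parts, λ′/μ′ a skew row of length m). Then for every partition ν with at most k parts and ν₁ ≤ n−k, the structure constant c^{w′}_{w, w(ν)} equals the Littlewood–Richardson coefficient c^{λ′}_{μ′, νᵗ}, where νᵗ is the conjugate (transpose) partition of ν; equivalently, c^{w′}_{w, w(ν)} = c^λ_{μ,ν} where λ = (λ′)ᵗ and μ = (μ′)ᵗ, so that λ/μ is a skew column of length m. -/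

import Mathlib

open Equiv MvPolynomial

attribute [local instance] Classical.propDecidable

namespace SchubertPieri

/-- Position `j ∈ {1,…,N}` (1-indexed) as an element of `Fin N` (0-indexed). -/
def pos (N : ℕ) [NeZero N] (j : ℕ) : Fin N :=
  ⟨(j - 1) % N, Nat.mod_lt _ (Nat.pos_of_ne_zero (NeZero.ne N))⟩

/-- The transposition `t_{a,b}` interchanging positions `a` and `b` (1-indexed). -/
def t (N : ℕ) [NeZero N] (a b : ℕ) : Equiv.Perm (Fin N) :=
  Equiv.swap (pos N a) (pos N b)

/-- The value `w(j)` for `j ∈ {1,…,N}` (1-indexed). -/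
def val {N : ℕ} [NeZero N] (w : Equiv.Perm (Fin N)) (j : ℕ) : ℕ :=
  (w (pos N j) : ℕ) + 1

/-- The length of `w`: its number of inversions. -/
def len {N : ℕ} (w : Equiv.Perm (Fin N)) : ℕ :=
  (Finset.univ.filter fun p : Fin N × Fin N => p.1 < p.2 ∧ w p.2 < w p.1).card

/-- The longest permutation `w₀ : j ↦ N+1-j`. -/
def w0 (N : ℕ) : Equiv.Perm (Fin N) :=
  ⟨Fin.rev, Fin.rev, Fin.rev_rev, Fin.rev_rev⟩

/-- The product `t_{a 0, b 0} ⋯ t_{a (i-1), b (i-1)}`. -/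
def tProd (N : ℕ) [NeZero N] (a b : ℕ → ℕ) (i : ℕ) : Equiv.Perm (Fin N) :=
  ((List.range i).map fun j => t N (a j) (b j)).prod

/-- `r[k,m] = t_{k,k+1} t_{k,k+2} ⋯ t_{k,k+m}`, the (m+1)-cycle with
`r[k,m](k) = k+m` and `r[k,m](j) = j-1` for `k+1 ≤ j ≤ k+m`. -/
def rPerm (N k m : ℕ) [NeZero N] : Equiv.Perm (Fin N) :=
  ((List.range m).map fun i => t N k (k + 1 + i)).prod

/-- `c[k,m] = t_{k,k+1} t_{k-1,k+1} ⋯ t_{k-m+1,k+1}`, the (m+1)-cycle with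
`c[k,m](j) = j+1` for `k-m+1 ≤ j ≤ k` and `c[k,m](k+1) = k-m+1`. -/
def cPerm (N k m : ℕ) [NeZero N] : Equiv.Perm (Fin N) :=
  ((List.range m).map fun i => t N (k - i) (k + 1)).prod

/-- The conditions that `aᵢ ≤ k < bᵢ` (with all indices in `{1,…,N}`) and that
`ℓ(w t_{a₁ b₁} ⋯ t_{aᵢ bᵢ}) = ℓ(w) + i` for `1 ≤ i ≤ m`. -/
def StepOK (N k m : ℕ) [NeZero N] (w : Equiv.Perm (Fin N)) (a b : ℕ → ℕ) : Prop :=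
  (∀ i, i < m → 1 ≤ a i ∧ a i ≤ k ∧ k < b i ∧ b i ≤ N) ∧
  (∀ i, i ≤ m → len (w * tProd N a b i) = len w + i)

/-- `w →_{r[k,m]} w'`. -/
def RelR (N k m : ℕ) [NeZero N] (w w' : Equiv.Perm (Fin N)) : Prop :=
  ∃ a b : ℕ → ℕ, StepOK N k m w a b ∧ w' = w * tProd N a b m ∧
    (∀ i j, i < m → j < m → i ≠ j → b i ≠ b j)

/-- `w →_{c[k,m]} w'`. -/
def RelC (N k m : ℕ) [NeZero N] (w w' : Equiv.Perm (Fin N)) : Prop :=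
  ∃ a b : ℕ → ℕ, StepOK N k m w a b ∧ w' = w * tProd N a b m ∧
    (∀ i j, i < m → j < m → i ≠ j → a i ≠ a j)

/-- The divided difference operator `∂ᵢ f = (f - sᵢ·f)/(xᵢ - xᵢ₊₁)` (1-indexed `i`);
the quotient is exact, and is recovered here as the (unique) witness of divisibility. -/
noncomputable def divDiff {N : ℕ} [NeZero N] (i : ℕ) (f : MvPolynomial (Fin N) ℤ) :
    MvPolynomial (Fin N) ℤ :=
  if h : (X (pos N i) - X (pos N (i + 1))) ∣ (f - rename (⇑(t N i (i + 1))) f) then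
    h.choose
  else 0

/-- `∂_{a₁} ∘ ⋯ ∘ ∂_{a_p}` applied to `f`, for a word `l = [a₁,…,a_p]`. -/
noncomputable def divDiffWord {N : ℕ} [NeZero N] (l : List ℕ) (f : MvPolynomial (Fin N) ℤ) :
    MvPolynomial (Fin N) ℤ :=
  l.foldr divDiff f

/-- Auxiliary: produce a reduced word for `w` by repeatedly removing a descent. -/
def redWordAux (N : ℕ) [NeZero N] : ℕ → Equiv.Perm (Fin N) → List ℕ
  | 0, _ => []
  | fuel + 1, w =>
    match ((List.range (N - 1)).map (· + 1)).find? (fun i => decide (val w (i + 1) < val w i)) with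
    | none => []
    | some i => redWordAux N fuel (w * t N i (i + 1)) ++ [i]

/-- A canonical reduced word `(a₁,…,a_p)` for `w`, i.e. `w = s_{a₁} ⋯ s_{a_p}` with `p = ℓ(w)`. -/
def redWord (N : ℕ) [NeZero N] (w : Equiv.Perm (Fin N)) : List ℕ :=
  redWordAux N (N * N) w

/-- The staircase monomial `x₁^{N-1} x₂^{N-2} ⋯ x_{N-1}`. -/
noncomputable def staircase (N : ℕ) : MvPolynomial (Fin N) ℤ :=
  ∏ i : Fin N, X i ^ (N - 1 - (i : ℕ))

/-- The Schubert polynomial `𝔖_w = ∂_{w⁻¹w₀}(x₁^{N-1} ⋯ x_{N-1})`. -/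
noncomputable def schubertPoly (N : ℕ) [NeZero N] (w : Equiv.Perm (Fin N)) :
    MvPolynomial (Fin N) ℤ :=
  divDiffWord (redWord N (w⁻¹ * w0 N)) (staircase N)

/-- The ideal of `Rₙ` generated by the symmetric polynomials with zero constant term. -/
noncomputable def symIdeal (N : ℕ) : Ideal (MvPolynomial (Fin N) ℤ) :=
  Ideal.span {f : MvPolynomial (Fin N) ℤ | f.IsSymmetric ∧ constantCoeff f = 0}

/-- The ring `Hₙ = Rₙ/𝒮`. -/
abbrev HRing (N : ℕ) := MvPolynomial (Fin N) ℤ ⧸ symIdeal N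

/-- The class of the Schubert polynomial `𝔖_w` in `Hₙ`. -/
noncomputable def SS (N : ℕ) [NeZero N] (w : Equiv.Perm (Fin N)) : HRing N :=
  Ideal.Quotient.mk (symIdeal N) (schubertPoly N w)

/-- The complete homogeneous symmetric polynomial of degree `m` in `x₁,…,x_k`. -/
noncomputable def hPoly (N k m : ℕ) : MvPolynomial (Fin N) ℤ :=
  ∑ s ∈ (Finset.univ.filter fun i : Fin N => (i : ℕ) < k).sym m,
    (Multiset.map X (s : Multiset (Fin N))).prod

/-- The elementary symmetric polynomial of degree `m` in `x₁,…,x_k`. -/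
noncomputable def ePoly (N k m : ℕ) : MvPolynomial (Fin N) ℤ :=
  ∑ s ∈ (Finset.univ.filter fun i : Fin N => (i : ℕ) < k).powersetCard m, ∏ i ∈ s, X i

/-- Covering relation of the `k`-Bruhat order. -/
def kCover (N k : ℕ) [NeZero N] (w w' : Equiv.Perm (Fin N)) : Prop :=
  ∃ a b : ℕ, 1 ≤ a ∧ a ≤ k ∧ k < b ∧ b ≤ N ∧ w' = w * t N a b ∧ len w' = len w + 1

/-- The (strict) `k`-Bruhat order `<ₖ`. -/
def kBruhat (N k : ℕ) [NeZero N] : Equiv.Perm (Fin N) → Equiv.Perm (Fin N) → Prop :=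
  Relation.TransGen (kCover N k)

/-- The label `w⁽ⁱ⁺¹⁾(a_{i+1})` (0-indexed `i`) of the `(i+1)`-st step of a path. -/
def label {N : ℕ} [NeZero N] (w : Equiv.Perm (Fin N)) (a b : ℕ → ℕ) (i : ℕ) : ℕ :=
  val (w * tProd N a b (i + 1)) (a i)

/-- `(a,b)` encodes a path of length `m` in the `k`-Bruhat order from `w` to `w'`
(normalized so that `a i = b i = 0` for `i ≥ m`, making the encoding unique). -/
def PathWit (N k m : ℕ) [NeZero N] (w w' : Equiv.Perm (Fin N))
    (ab : (ℕ → ℕ) × (ℕ → ℕ)) : Prop :=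
  StepOK N k m w ab.1 ab.2 ∧ w' = w * tProd N ab.1 ab.2 m ∧
    ∀ i, m ≤ i → ab.1 i = 0 ∧ ab.2 i = 0

/-- Paths of length `m` in the `k`-Bruhat order from `w` to `w'` with strictly
increasing labels. -/
def IncPaths (N k m : ℕ) [NeZero N] (w w' : Equiv.Perm (Fin N)) :
    Set ((ℕ → ℕ) × (ℕ → ℕ)) :=
  {ab | PathWit N k m w w' ab ∧
    ∀ i j, i < j → j < m → label w ab.1 ab.2 i < label w ab.1 ab.2 j}

/-- Paths of length `m` in the `k`-Bruhat order from `w` to `w'` with strictly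
decreasing labels. -/
def DecPaths (N k m : ℕ) [NeZero N] (w w' : Equiv.Perm (Fin N)) :
    Set ((ℕ → ℕ) × (ℕ → ℕ)) :=
  {ab | PathWit N k m w w' ab ∧
    ∀ i j, i < j → j < m → label w ab.1 ab.2 j < label w ab.1 ab.2 i}


/-- The cycle `(x₁ x₂ … x_r)` (sending `x₁ ↦ x₂ ↦ ⋯ ↦ x_r ↦ x₁`), as a product
of transpositions. -/
def cycleList (N : ℕ) [NeZero N] (l : List ℕ) : Equiv.Perm (Fin N) :=
  ((l.zip l.tail).map fun p => t N p.1 p.2).prod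

/-- The Grassmannian permutation `h[k;p,q]` of descent `k` and hook shape `(p,1^{q-1})`:
the `(p+q)`-cycle `(k-q+1  k-q+2 … k  k+p  k+p-1 … k+1)`. -/
def hookPerm (N k p q : ℕ) [NeZero N] : Equiv.Perm (Fin N) :=
  cycleList N (((List.range q).map fun i => k - q + 1 + i) ++
    ((List.range p).reverse.map fun i => k + 1 + i))

/-- `w|ₚ ∈ S_{N-1}`: delete row `p` and column `w(p)` from the permutation matrix of `w`. -/
def drop {N : ℕ} (w : Equiv.Perm (Fin (N + 1))) (p : Fin (N + 1)) : Equiv.Perm (Fin N) :=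
  Equiv.removeNone (((finSuccEquiv' p).symm.trans (w : Fin (N + 1) ≃ Fin (N + 1))).trans
    (finSuccEquiv' (w p)))

/-- `lam` is a partition with at most `k` parts (1-indexed parts `lam 1 ≥ lam 2 ≥ ⋯`,
normalized by `lam 0 = 0`). -/
def IsPartFun (k : ℕ) (lam : ℕ → ℕ) : Prop :=
  lam 0 = 0 ∧ (∀ j, 1 ≤ j → lam (j + 1) ≤ lam j) ∧ ∀ j, k < j → lam j = 0

/-- `h_d(x₁,…,x_k)` for an integer `d`, with `h_d = 0` for `d < 0`. -/
noncomputable def hPolyZ (N k : ℕ) (d : ℤ) : MvPolynomial (Fin N) ℤ :=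
  if 0 ≤ d then hPoly N k d.toNat else 0

/-- The Schur polynomial `s_λ(x₁,…,x_k)`, via the Jacobi–Trudi determinant
`det(h_{λᵢ+j-i})_{1 ≤ i,j ≤ k}`. -/
noncomputable def schurPoly (N k : ℕ) (lam : ℕ → ℕ) : MvPolynomial (Fin N) ℤ :=
  (Matrix.of fun i j : Fin k =>
    hPolyZ N k ((lam ((i : ℕ) + 1) : ℤ) + (j : ℕ) - (i : ℕ))).det

/-- `r_j = #{i : aᵢ = j}` (with `i` ranging over `0,…,m-1`, 0-indexed). -/
def rJ (a : ℕ → ℕ) (m j : ℕ) : ℕ := ((Finset.range m).filter fun i => a i = j).card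

/-- `μ_j = r_{j+1} + ⋯ + r_k`. -/
def muJ (a : ℕ → ℕ) (m k j : ℕ) : ℕ :=
  if j = 0 then 0 else ∑ j' ∈ Finset.Icc (j + 1) k, rJ a m j'

/-- `λ_j = μ_j + r_j`. -/
def lamJ (a : ℕ → ℕ) (m k j : ℕ) : ℕ :=
  if j = 0 then 0 else muJ a m k j + rJ a m j

/-- `d_j = #{i : bᵢ = N+1-j}` (with `i` ranging over `0,…,m-1`, 0-indexed). -/
def dJ (b : ℕ → ℕ) (m N j : ℕ) : ℕ :=
  ((Finset.range m).filter fun i => b i = N + 1 - j).card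

/-- `μ′_j = d_{j+1} + ⋯ + d_{N-k}`. -/
def muJ' (b : ℕ → ℕ) (m N k j : ℕ) : ℕ :=
  if j = 0 then 0 else ∑ j' ∈ Finset.Icc (j + 1) (N - k), dJ b m N j'

/-- `λ′_j = μ′_j + d_j`. -/
def lamJ' (b : ℕ → ℕ) (m N k j : ℕ) : ℕ :=
  if j = 0 then 0 else muJ' b m N k j + dJ b m N j

/-- The conjugate (transpose) partition: `νᵗ_j = #{i : νᵢ ≥ j}`, for `ν` with at
most `k` parts. -/
def conjPart (k : ℕ) (nu : ℕ → ℕ) (j : ℕ) : ℕ :=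
  if j = 0 then 0 else ((Finset.Icc 1 k).filter fun i => j ≤ nu i).card

/-- `wv` is the Grassmannian permutation of descent `k` and shape `nu`:
`wv(j) = j + ν_{k+1-j}` for `1 ≤ j ≤ k`, and `wv` is increasing on `{k+1,…,N}`. -/
def IsGrassOf (N k : ℕ) [NeZero N] (nu : ℕ → ℕ) (wv : Equiv.Perm (Fin N)) : Prop :=
  (∀ j, 1 ≤ j → j ≤ k → val wv j = j + nu (k + 1 - j)) ∧
  (∀ j, k < j → j < N → val wv j < val wv (j + 1))

/-- Paths of length `m` in the `k`-Bruhat order from `w` to `w'` whose labels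
increase strictly for the first `p` steps and decrease strictly thereafter
(positions `p, p+1, …, m` being decreasing, 1-indexed). -/
def IncDecPaths (N k m p : ℕ) [NeZero N] (w w' : Equiv.Perm (Fin N)) :
    Set ((ℕ → ℕ) × (ℕ → ℕ)) :=
  {ab | PathWit N k m w w' ab ∧
    (∀ i j, i < j → j < p → label w ab.1 ab.2 i < label w ab.1 ab.2 j) ∧
    (∀ i j, p - 1 ≤ i → i < j → j < m → label w ab.1 ab.2 j < label w ab.1 ab.2 i)}

/-- Paths of length `m` in the `k`-Bruhat order from `w` to `w'` whose labels
decrease strictly for the first `q` steps and increase strictly thereafter. -/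
def DecIncPaths (N k m q : ℕ) [NeZero N] (w w' : Equiv.Perm (Fin N)) :
    Set ((ℕ → ℕ) × (ℕ → ℕ)) :=
  {ab | PathWit N k m w w' ab ∧
    (∀ i j, i < j → j < q → label w ab.1 ab.2 j < label w ab.1 ab.2 i) ∧
    (∀ i j, q - 1 ≤ i → i < j → j < m → label w ab.1 ab.2 i < label w ab.1 ab.2 j)}

/-! The structure constant `c^{w'}_{w, v}` is the constant term of `∂_{w'} (𝔖_w 𝔖_v)`. The
substitution `x_p ↦ -x_{n+1-p}` intertwines divided differences with conjugation by `w₀`, which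
turns `w(ν)` into a Grassmannian permutation of the conjugate shape; hence `𝔖_{w(ν)}` may be
replaced by `s_{νᵗ}(-x_n, …, -x_{k+1})`. By Monk's rule the coefficient of `𝔖_{w'}` in
`𝔖_w · ∏ (-x_{c_i})`, with all `c_i > k`, is a signed count of chains in the Bruhat order, and
since `w⁻¹w'` is a product of `t_{a_i, b_i}` with distinct `a_i ≤ k < b_i`, it is `1` or `0`
according as the multisets `{c_i}` and `{b_i}` agree or not. The structure constant is therefore
the coefficient of `x^d` in `s_{νᵗ}(x_1, …, x_{n-k})`. As `μ'_j = λ'_{j+1}`, the bialternant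
formula shows that the Littlewood–Richardson coefficient `c^{λ'}_{μ', νᵗ}` is the same
coefficient. -/

section DividedDifference

variable {σ R : Type*} [CommRing R]

theorem X_sub_X_ne_zero [Nontrivial R] {p q : σ} (h : p ≠ q) :
    (X p - X q : MvPolynomial σ R) ≠ 0 :=
  fun e => h (X_injective (sub_eq_zero.mp e))

theorem rename_perm_rename_perm (u v : Perm σ) (f : MvPolynomial σ R) :
    rename u (rename v f) = rename (u * v) f := by
  rw [rename_rename]; rfl

variable [DecidableEq σ]

theorem X_sub_X_dvd_sub_rename_swap (p q : σ) (f : MvPolynomial σ R) :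
    (X p - X q) ∣ f - rename (swap p q) f := by
  induction f using MvPolynomial.induction_on with
  | C a => simp
  | add f g hf hg =>
    rw [map_add, add_sub_add_comm]
    exact dvd_add hf hg
  | mul_X f i hf =>
    have leibniz : f * X i - rename (swap p q) (f * X i) =
        (f - rename (swap p q) f) * X i + rename (swap p q) f * (X i - X (swap p q i)) := by
      rw [map_mul, rename_X]; ring
    rw [leibniz]
    refine dvd_add (hf.mul_right _) (Dvd.dvd.mul_left ?_ _)
    rcases eq_or_ne i p with rfl | hp
    · rw [swap_apply_left]
    rcases eq_or_ne i q with rfl | hq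
    · rw [swap_apply_right, ← neg_sub, neg_dvd]
    · rw [swap_apply_of_ne_of_ne hp hq, sub_self]
      exact dvd_zero _

variable [IsDomain R]

/-- The divided difference `(f - t_{p,q}·f) / (x_p - x_q)` in the two variables `p ≠ q`, as a linear
map. -/
noncomputable def dividedDiff {p q : σ} (h : p ≠ q) : MvPolynomial σ R →ₗ[R] MvPolynomial σ R where
  toFun f := (X_sub_X_dvd_sub_rename_swap p q f).choose
  map_add' f g := by
    apply mul_left_cancel₀ (X_sub_X_ne_zero (R := R) h)
    rw [mul_add]
    iterate 3 rw [← (X_sub_X_dvd_sub_rename_swap p q _).choose_spec]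
    rw [map_add, add_sub_add_comm]
  map_smul' c f := by
    apply mul_left_cancel₀ (X_sub_X_ne_zero (R := R) h)
    rw [RingHom.id_apply, mul_smul_comm]
    iterate 2 rw [← (X_sub_X_dvd_sub_rename_swap p q _).choose_spec]
    rw [map_smul, smul_sub]

theorem X_sub_X_mul_dividedDiff {p q : σ} (h : p ≠ q) (f : MvPolynomial σ R) :
    (X p - X q) * dividedDiff h f = f - rename (swap p q) f :=
  (X_sub_X_dvd_sub_rename_swap p q f).choose_spec.symm

theorem dividedDiff_eq_of_mul_eq {p q : σ} (h : p ≠ q) {f g : MvPolynomial σ R}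
    (hg : (X p - X q) * g = f - rename (swap p q) f) : dividedDiff h f = g :=
  mul_left_cancel₀ (X_sub_X_ne_zero h) ((X_sub_X_mul_dividedDiff h f).trans hg.symm)

theorem dividedDiff_congr {p q p' q' : σ} (hp : p = p') (hq : q = q') (h : p ≠ q) (h' : p' ≠ q')
    (f : MvPolynomial σ R) : dividedDiff h f = dividedDiff h' f := by
  subst hp hq; rfl

theorem dividedDiff_symm {p q : σ} (h : p ≠ q) (f : MvPolynomial σ R) :
    dividedDiff h.symm f = -dividedDiff h f := by
  apply dividedDiff_eq_of_mul_eq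
  rw [swap_comm, ← X_sub_X_mul_dividedDiff h]
  ring

theorem dividedDiff_eq_zero {p q : σ} (h : p ≠ q) {f : MvPolynomial σ R}
    (hf : rename (swap p q) f = f) : dividedDiff h f = 0 :=
  dividedDiff_eq_of_mul_eq h (by rw [hf, mul_zero, sub_self])

theorem dividedDiff_mul {p q : σ} (h : p ≠ q) (f g : MvPolynomial σ R) :
    dividedDiff h (f * g) = dividedDiff h f * g + rename (swap p q) f * dividedDiff h g := by
  apply dividedDiff_eq_of_mul_eq
  rw [map_mul]
  linear_combination g * X_sub_X_mul_dividedDiff h f +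
    rename (swap p q) f * X_sub_X_mul_dividedDiff h g

theorem dividedDiff_mul_of_rename_eq {p q : σ} (h : p ≠ q) {g : MvPolynomial σ R}
    (hg : rename (swap p q) g = g) (f : MvPolynomial σ R) :
    dividedDiff h (g * f) = g * dividedDiff h f := by
  rw [dividedDiff_mul, dividedDiff_eq_zero h hg, hg, zero_mul, zero_add]

theorem dividedDiff_X {p q : σ} (h : p ≠ q) (b : σ) :
    dividedDiff h (X b : MvPolynomial σ R) =
      (if b = p then 1 else 0) - (if b = q then 1 else 0) := by
  apply dividedDiff_eq_of_mul_eq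
  rw [rename_X]
  rcases eq_or_ne b p with rfl | hp
  · simp [h]
  rcases eq_or_ne b q with rfl | hq
  · simp [hp]
  · simp [hp, hq, swap_apply_of_ne_of_ne hp hq]

theorem rename_swap_dividedDiff {p q : σ} (h : p ≠ q) (f : MvPolynomial σ R) :
    rename (swap p q) (dividedDiff h f) = dividedDiff h f := by
  have key := congrArg (rename (swap p q)) (X_sub_X_mul_dividedDiff h f)
  simp only [map_mul, map_sub, rename_X, swap_apply_left, swap_apply_right,
    rename_perm_rename_perm, swap_mul_self, Perm.coe_one, rename_id, AlgHom.coe_id, id] at key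
  exact (dividedDiff_eq_of_mul_eq h (by linear_combination -key)).symm

theorem dividedDiff_dividedDiff_self {p q : σ} (h : p ≠ q) (f : MvPolynomial σ R) :
    dividedDiff h (dividedDiff h f) = 0 :=
  dividedDiff_eq_zero h (rename_swap_dividedDiff h f)

theorem rename_perm_dividedDiff (u : Perm σ) {p q : σ} (h : p ≠ q) (f : MvPolynomial σ R) :
    rename u (dividedDiff h f) = dividedDiff (u.injective.ne h) (rename u f) := by
  symm
  apply dividedDiff_eq_of_mul_eq
  have key := congrArg (rename u) (X_sub_X_mul_dividedDiff h f)
  rwa [map_mul, map_sub, map_sub, rename_X, rename_X, rename_perm_rename_perm,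
    mul_swap_eq_swap_mul, ← rename_perm_rename_perm] at key

theorem dividedDiff_comm {p q r s : σ} (hpq : p ≠ q) (hrs : r ≠ s) (hpr : p ≠ r) (hps : p ≠ s)
    (hqr : q ≠ r) (hqs : q ≠ s) (f : MvPolynomial σ R) :
    dividedDiff hpq (dividedDiff hrs f) = dividedDiff hrs (dividedDiff hpq f) := by
  apply dividedDiff_eq_of_mul_eq
  have hX : rename (swap r s) (X p - X q : MvPolynomial σ R) = X p - X q := by
    simp [swap_apply_of_ne_of_ne hpr hps, swap_apply_of_ne_of_ne hqr hqs]
  have hD : rename (swap p q) (dividedDiff hrs f) = dividedDiff hrs (rename (swap p q) f) := by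
    rw [rename_perm_dividedDiff]
    exact dividedDiff_congr (swap_apply_of_ne_of_ne hpr.symm hqr.symm)
      (swap_apply_of_ne_of_ne hps.symm hqs.symm) _ _ _
  rw [hD, ← map_sub, ← X_sub_X_mul_dividedDiff hpq f, dividedDiff_mul_of_rename_eq hrs hX]

/-- Clearing denominators in `∂_{ab} ∂_{bc} ∂_{ab}` gives the antisymmetrizer of `a, b, c`, which is
invariant under exchanging `a` and `c` up to sign. -/
theorem prod_mul_dividedDiff_braid {a b c : σ} (hab : a ≠ b) (hbc : b ≠ c) (hac : a ≠ c)
    (f : MvPolynomial σ R) :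
    (X a - X b) * (X b - X c) * (X a - X c) *
        dividedDiff hab (dividedDiff hbc (dividedDiff hab f)) =
      f - rename (swap a b) f - rename (swap b c) f - rename (swap a c) f +
        rename (swap a b * swap a c) f + rename (swap b c * swap a c) f := by
  have hs : rename (swap a b) (dividedDiff hbc (dividedDiff hab f)) =
      dividedDiff hac (dividedDiff hab f) := by
    rw [rename_perm_dividedDiff, rename_swap_dividedDiff]
    exact dividedDiff_congr (swap_apply_right _ _) (swap_apply_of_ne_of_ne hac.symm hbc.symm) _ _ _
  have ht : rename (swap b c) (dividedDiff hab f) = dividedDiff hac (rename (swap b c) f) := by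
    rw [rename_perm_dividedDiff]
    exact dividedDiff_congr (swap_apply_of_ne_of_ne hab hac) (swap_apply_left _ _) _ _ _
  have hr : rename (swap a c) (dividedDiff hab f) = dividedDiff hbc.symm (rename (swap a c) f) := by
    rw [rename_perm_dividedDiff]
    exact dividedDiff_congr (swap_apply_left _ _) (swap_apply_of_ne_of_ne hab.symm hbc) _ _ _
  have hrt : swap a c * swap b c = swap a b * swap a c := by
    rw [mul_swap_eq_swap_mul, swap_apply_of_ne_of_ne hab.symm hbc, swap_apply_right, swap_comm b a]
  have e1 := X_sub_X_mul_dividedDiff hab (dividedDiff hbc (dividedDiff hab f))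
  have e2 := X_sub_X_mul_dividedDiff hbc (dividedDiff hab f)
  have e3 := X_sub_X_mul_dividedDiff hac (dividedDiff hab f)
  have e4 := X_sub_X_mul_dividedDiff hac (rename (swap b c) f)
  have e5 := X_sub_X_mul_dividedDiff hbc.symm (rename (swap a c) f)
  rw [hs] at e1
  rw [ht] at e2
  rw [hr] at e3
  rw [rename_perm_rename_perm, hrt] at e4
  rw [rename_perm_rename_perm, swap_comm c b] at e5
  linear_combination (X b - X c) * (X a - X c) * e1 + (X a - X c) * e2 - (X b - X c) * e3 +
    X_sub_X_mul_dividedDiff hab f - e4 - e5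

theorem dividedDiff_braid {a b c : σ} (hab : a ≠ b) (hbc : b ≠ c) (hac : a ≠ c)
    (f : MvPolynomial σ R) :
    dividedDiff hab (dividedDiff hbc (dividedDiff hab f)) =
      dividedDiff hbc (dividedDiff hab (dividedDiff hbc f)) := by
  have habc := prod_mul_dividedDiff_braid hab hbc hac f
  have hcba := prod_mul_dividedDiff_braid hbc.symm hab.symm hac.symm f
  simp only [dividedDiff_symm hbc, dividedDiff_symm hab, map_neg, swap_comm c b, swap_comm b a,
    swap_comm c a] at hcba
  have hprod : (X a - X b) * (X b - X c) * (X a - X c) ≠ (0 : MvPolynomial σ R) :=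
    mul_ne_zero (mul_ne_zero (X_sub_X_ne_zero hab) (X_sub_X_ne_zero hbc)) (X_sub_X_ne_zero hac)
  apply mul_left_cancel₀ hprod
  linear_combination habc - hcba

end DividedDifference

section Length

variable {N : ℕ}

/-- The set of inversions of `u`, whose cardinality is `len u`. -/
def inversions (u : Perm (Fin N)) : Finset (Fin N × Fin N) :=
  Finset.univ.filter fun x => x.1 < x.2 ∧ u x.2 < u x.1

/-- The positions strictly between `p` and `q` whose values under `u` lie strictly between `u p` and
`u q`; for `u p < u q` they measure how far `u t_{p,q}` is from covering `u` in Bruhat order. -/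
def between (u : Perm (Fin N)) (p q : Fin N) : Finset (Fin N) :=
  Finset.univ.filter fun j => (p < j ∧ j < q) ∧ u p < u j ∧ u j < u q

/-- The inversions of `u t_{p,q}` that do not come from inversions of `u` when `u p < u q`. -/
def newInversions (u : Perm (Fin N)) (p q : Fin N) : Finset (Fin N × Fin N) :=
  insert (p, q) ((between u p q).image (p, ·) ∪ (between u p q).image (·, q))

variable {u : Perm (Fin N)} {p q i j : Fin N}

theorem mem_inversions : (i, j) ∈ inversions u ↔ i < j ∧ u j < u i := by
  simp [inversions]

theorem mem_between : j ∈ between u p q ↔ (p < j ∧ j < q) ∧ u p < u j ∧ u j < u q := by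
  simp [between]

theorem mem_newInversions : (i, j) ∈ newInversions u p q ↔
    (i = p ∧ j = q) ∨ (i = p ∧ j ∈ between u p q) ∨ (j = q ∧ i ∈ between u p q) := by
  simp [newInversions]
  grind

theorem card_newInversions :
    (newInversions u p q).card = 2 * (between u p q).card + 1 := by
  have hp : p ∉ between u p q := fun hp => (mem_between.mp hp).1.1.false
  have hq : q ∉ between u p q := fun hq => (mem_between.mp hq).1.2.false
  rw [newInversions, Finset.card_insert_of_notMem (by simp [hp, hq]),
    Finset.card_union_of_disjoint,
    Finset.card_image_of_injective _ (Prod.mk_right_injective p),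
    Finset.card_image_of_injective _ (Prod.mk_left_injective q), two_mul]
  rw [Finset.disjoint_left]
  rintro ⟨i, j⟩ hi hj
  simp only [Finset.mem_image, Prod.mk.injEq] at hi hj
  grind

theorem newInversions_subset (hpq : p < q) (h : u p < u q) :
    newInversions u p q ⊆ inversions (u * swap p q) := by
  rintro ⟨i, j⟩ hx
  rw [mem_newInversions, mem_between, mem_between] at hx
  rw [mem_inversions, Perm.mul_apply, Perm.mul_apply, swap_apply_def, swap_apply_def]
  grind

theorem swap_lt_swap_or (hpq : p < q) (hij : i < j) :
    swap p q i < swap p q j ∨ (i = p ∧ j ≤ q) ∨ (p ≤ i ∧ j = q) := by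
  rw [swap_apply_def, swap_apply_def]
  grind

/-- The action of `t_{p,q}` on pairs of positions, restricted to the pairs whose order it
preserves. -/
def swapPair (p q : Fin N) (x : Fin N × Fin N) : Fin N × Fin N :=
  if swap p q x.1 < swap p q x.2 then (swap p q x.1, swap p q x.2) else x

theorem swapPair_swapPair (hij : i < j) : swapPair p q (swapPair p q (i, j)) = (i, j) := by
  by_cases hs : swap p q i < swap p q j <;> simp [swapPair, hs, hij]

theorem swapPair_mem_sdiff (hpq : p < q) (h : u p < u q) (hx : (i, j) ∈ inversions u) :
    swapPair p q (i, j) ∈ inversions (u * swap p q) \ newInversions u p q := by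
  obtain ⟨hij, hu⟩ := mem_inversions.mp hx
  by_cases hs : swap p q i < swap p q j
  · simp only [swapPair, hs, ↓reduceIte, Finset.mem_sdiff, mem_inversions, mem_newInversions,
      mem_between, Perm.mul_apply, swap_apply_self, swap_apply_eq_iff, swap_apply_left,
      swap_apply_right]
    refine ⟨⟨trivial, hu⟩, ?_⟩
    rintro (⟨rfl, rfl⟩ | ⟨rfl, ⟨-, hj⟩, -⟩ | ⟨rfl, ⟨hi, -⟩, -⟩)
    · exact hij.not_gt hpq
    · rw [swap_apply_of_ne_of_ne (hpq.trans hij).ne' hij.ne'] at hj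
      exact hj.not_gt hij
    · rw [swap_apply_of_ne_of_ne hij.ne (hij.trans hpq).ne] at hi
      exact hi.not_gt hij
  · simp only [swapPair, hs, ↓reduceIte, Finset.mem_sdiff, mem_inversions, mem_newInversions,
      mem_between, Perm.mul_apply]
    rcases (swap_lt_swap_or hpq hij).resolve_left hs with ⟨rfl, hj⟩ | ⟨hi, rfl⟩
    · rcases hj.eq_or_lt with rfl | hj
      · exact absurd h hu.not_gt
      · rw [swap_apply_left, swap_apply_of_ne_of_ne hij.ne' hj.ne]
        grind
    · rcases hi.eq_or_lt with rfl | hi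
      · exact absurd h hu.not_gt
      · rw [swap_apply_right, swap_apply_of_ne_of_ne hi.ne' hij.ne]
        grind

theorem swapPair_mem_inversions (hpq : p < q)
    (hx : (i, j) ∈ inversions (u * swap p q) \ newInversions u p q) :
    swapPair p q (i, j) ∈ inversions u := by
  simp only [Finset.mem_sdiff, mem_inversions, mem_newInversions, mem_between,
    Perm.mul_apply] at hx
  obtain ⟨⟨hij, hu⟩, hnew⟩ := hx
  by_cases hs : swap p q i < swap p q j
  · simp only [swapPair, hs, ↓reduceIte, mem_inversions, hu, and_self]
  · simp only [swapPair, hs, ↓reduceIte, mem_inversions, hij, true_and]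
    rcases (swap_lt_swap_or hpq hij).resolve_left hs with ⟨rfl, hj⟩ | ⟨hi, rfl⟩
    · have hj' : j < q := hj.lt_of_ne fun e => hnew (.inl ⟨rfl, e⟩)
      rw [swap_apply_left, swap_apply_of_ne_of_ne hij.ne' hj'.ne] at hu
      by_contra! hle
      exact hnew (.inr (.inl ⟨rfl, ⟨hij, hj'⟩, hle.lt_of_ne (u.injective.ne hij.ne), hu⟩))
    · have hi' : p < i := hi.lt_of_ne fun e => hnew (.inl ⟨e.symm, rfl⟩)
      rw [swap_apply_right, swap_apply_of_ne_of_ne hi'.ne' hij.ne] at hu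
      by_contra! hle
      exact hnew (.inr (.inr ⟨rfl, ⟨hi', hij⟩, hu, hle.lt_of_ne (u.injective.ne hij.ne)⟩))

theorem len_mul_swap (hpq : p < q) (h : u p < u q) :
    len (u * swap p q) = len u + 2 * (between u p q).card + 1 := by
  have hcard : (inversions u).card = (inversions (u * swap p q) \ newInversions u p q).card :=
    Finset.card_nbij' (swapPair p q) (swapPair p q)
      (fun _ hx => swapPair_mem_sdiff hpq h hx)
      (fun _ hx => swapPair_mem_inversions hpq hx)
      (fun _ hx => swapPair_swapPair (mem_inversions.mp hx).1)
      (fun _ hx => swapPair_swapPair (mem_inversions.mp (Finset.mem_sdiff.mp hx).1).1)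
  change (inversions (u * swap p q)).card = (inversions u).card + _ + _
  rw [← Finset.card_sdiff_add_card_eq_card (newInversions_subset hpq h), card_newInversions,
    ← hcard, add_assoc]

theorem len_mul_swap_of_gt (hpq : p < q) (h : u q < u p) :
    len u = len (u * swap p q) + 2 * (between (u * swap p q) p q).card + 1 := by
  have := len_mul_swap (u := u * swap p q) hpq (by simpa using h)
  rwa [mul_assoc, swap_mul_self, mul_one] at this

theorem len_mul_swap_add_one_iff (hpq : p < q) :
    len (u * swap p q) + 1 = len u ↔ u q < u p ∧ ∀ j, p < j → j < q → u q < u j → u p < u j := by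
  rcases lt_or_gt_of_ne (u.injective.ne hpq.ne) with h | h
  · have := len_mul_swap hpq h
    exact iff_of_false (by omega) fun h' => h.not_gt h'.1
  · have hlen := len_mul_swap_of_gt hpq h
    have hempty : len (u * swap p q) + 1 = len u ↔ between (u * swap p q) p q = ∅ := by
      rw [← Finset.card_eq_zero]; omega
    rw [hempty, Finset.eq_empty_iff_forall_notMem, and_iff_right h]
    refine forall_congr' fun j => ⟨fun hj hpj hjq hqj => ?_, fun hj hmem => ?_⟩
    · rw [mem_between, Perm.mul_apply, Perm.mul_apply, Perm.mul_apply, swap_apply_left,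
        swap_apply_right, swap_apply_of_ne_of_ne hpj.ne' hjq.ne] at hj
      by_contra! hle
      exact hj ⟨⟨hpj, hjq⟩, hqj, hle.lt_of_ne (u.injective.ne hpj.ne')⟩
    · obtain ⟨⟨hpj, hjq⟩, hqj, hjp⟩ := mem_between.mp hmem
      rw [Perm.mul_apply, Perm.mul_apply, swap_apply_of_ne_of_ne hpj.ne' hjq.ne] at hqj hjp
      rw [swap_apply_left] at hqj
      rw [swap_apply_right] at hjp
      exact (hj hpj hjq hqj).not_gt hjp

theorem len_one : len (1 : Perm (Fin N)) = 0 := by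
  rw [len, Finset.card_eq_zero, Finset.filter_eq_empty_iff]
  exact fun x _ hx => hx.1.not_gt hx.2

theorem len_le (u : Perm (Fin N)) : len u ≤ N * N :=
  (Finset.card_le_univ _).trans (by simp)

theorem perm_eq_one_of_forall_le (h : ∀ j, j ≤ u j) : u = 1 := by
  have hsum : ∑ j : Fin N, (j : ℕ) = ∑ j, (u j : ℕ) :=
    (Equiv.sum_comp u fun j => (j : ℕ)).symm
  have heq := (Finset.sum_eq_sum_iff_of_le fun j _ => Fin.le_def.mp (h j)).mp hsum
  exact Equiv.ext fun j => Fin.ext (heq j (Finset.mem_univ j)).symm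

end Length

section SimpleSwap

variable {n : ℕ}

/-- The simple transposition exchanging the adjacent positions `i` and `i + 1`. -/
def simpleSwap (i : Fin n) : Perm (Fin (n + 1)) :=
  swap i.castSucc i.succ

variable {i j : Fin n} {u : Perm (Fin (n + 1))} {p q : Fin (n + 1)}

theorem simpleSwap_castSucc : simpleSwap i i.castSucc = i.succ := swap_apply_left _ _

theorem simpleSwap_succ : simpleSwap i i.succ = i.castSucc := swap_apply_right _ _

theorem simpleSwap_mul_self (i : Fin n) : simpleSwap i * simpleSwap i = 1 := swap_mul_self _ _

theorem simpleSwap_simpleSwap (i : Fin n) (p : Fin (n + 1)) :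
    simpleSwap i (simpleSwap i p) = p := swap_apply_self _ _ _

theorem simpleSwap_inv (i : Fin n) : (simpleSwap i)⁻¹ = simpleSwap i := swap_inv _ _

theorem mul_simpleSwap_mul_simpleSwap (u : Perm (Fin (n + 1))) (i : Fin n) :
    u * simpleSwap i * simpleSwap i = u := by
  rw [mul_assoc, simpleSwap_mul_self, mul_one]

theorem simpleSwap_apply_of_lt_or_lt (h : (p : ℕ) < i ∨ (i : ℕ) + 1 < p) :
    simpleSwap i p = p := by
  apply swap_apply_of_ne_of_ne <;> rintro rfl <;> simp at h

theorem simpleSwap_lt_simpleSwap (h : p < q) (hne : ¬(p = i.castSucc ∧ q = i.succ)) :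
    simpleSwap i p < simpleSwap i q := by
  refine (swap_lt_swap_or Fin.castSucc_lt_succ h).resolve_right ?_
  rw [Fin.le_def, Fin.le_def, Fin.ext_iff, Fin.ext_iff] at *
  simp only [Fin.lt_def, Fin.val_castSucc, Fin.val_succ] at *
  omega

theorem simpleSwap_mul_comm (h : (i : ℕ) + 1 < j) :
    simpleSwap i * simpleSwap j = simpleSwap j * simpleSwap i := by
  refine Perm.Disjoint.commute fun p => ?_
  rcases Nat.lt_or_ge ((i : ℕ) + 1) p with hp | hp
  · exact .inl (simpleSwap_apply_of_lt_or_lt (.inr hp))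
  · exact .inr (simpleSwap_apply_of_lt_or_lt (.inl (by omega)))

theorem simpleSwap_braid (h : (i : ℕ) + 1 = j) :
    simpleSwap i * simpleSwap j * simpleSwap i = simpleSwap j * simpleSwap i * simpleSwap j := by
  have hij : j.castSucc = i.succ := Fin.ext h.symm
  have hne : i.castSucc ≠ j.succ := fun e => by simp [Fin.ext_iff] at e; omega
  rw [simpleSwap, simpleSwap, hij, swap_mul_swap_mul_swap Fin.castSucc_lt_succ.ne hne,
    swap_comm i.succ, swap_comm i.castSucc,
    swap_mul_swap_mul_swap (hij ▸ Fin.castSucc_lt_succ.ne') hne.symm, swap_comm]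

theorem lt_or_gt_castSucc_succ (u : Perm (Fin (n + 1))) (i : Fin n) :
    u i.castSucc < u i.succ ∨ u i.succ < u i.castSucc :=
  lt_or_gt_of_ne (u.injective.ne Fin.castSucc_lt_succ.ne)

theorem len_mul_simpleSwap_of_descent (h : u i.succ < u i.castSucc) :
    len (u * simpleSwap i) + 1 = len u :=
  (len_mul_swap_add_one_iff Fin.castSucc_lt_succ).mpr
    ⟨h, fun j hj hj' => by simp only [Fin.lt_def, Fin.val_castSucc, Fin.val_succ] at hj hj'; omega⟩

theorem perm_eq_one_of_forall_ascent (h : ∀ i : Fin n, u i.castSucc < u i.succ) : u = 1 :=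
  perm_eq_one_of_forall_le fun _ => (Fin.strictMono_iff_lt_succ.mpr h).le_apply

theorem exists_descent_of_ne_one (h : u ≠ 1) : ∃ i : Fin n, u i.succ < u i.castSucc := by
  contrapose! h
  exact perm_eq_one_of_forall_ascent fun i =>
    (lt_or_gt_castSucc_succ u i).resolve_right (h i).not_gt

theorem perm_descent_induction {P : Perm (Fin (n + 1)) → Prop} (one : P 1)
    (descent : ∀ w (i : Fin n), w i.succ < w i.castSucc → P (w * simpleSwap i) → P w) (w) :
    P w := by
  induction hL : len w using Nat.strong_induction_on generalizing w with
  | _ L ih =>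
    rcases eq_or_ne w 1 with rfl | h
    · exact one
    · obtain ⟨i, hi⟩ := exists_descent_of_ne_one h
      have := len_mul_simpleSwap_of_descent hi
      exact descent w i hi (ih _ (by omega) _ rfl)

theorem perm_eq_one_of_len_eq_zero (h : len u = 0) : u = 1 := by
  by_contra hne
  obtain ⟨i, hi⟩ := exists_descent_of_ne_one hne
  have := len_mul_simpleSwap_of_descent hi
  omega

end SimpleSwap

section PermutationDividedDifference

variable {n : ℕ} {R : Type*} [CommRing R] [IsDomain R]

/-- The divided difference operator `∂ᵢ` in the adjacent variables at positions `i` and `i + 1`. -/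
noncomputable def ddiff (i : Fin n) :
    MvPolynomial (Fin (n + 1)) R →ₗ[R] MvPolynomial (Fin (n + 1)) R :=
  dividedDiff (Fin.castSucc_lt_succ (i := i)).ne

/-- The divided difference operator `∂_w`, composed along a reduced word of `w` obtained by
repeatedly removing a descent. -/
noncomputable def ddiffPerm (w : Perm (Fin (n + 1))) :
    MvPolynomial (Fin (n + 1)) R →ₗ[R] MvPolynomial (Fin (n + 1)) R :=
  if h : ∃ i : Fin n, w i.succ < w i.castSucc then
    ddiffPerm (w * simpleSwap h.choose) ∘ₗ ddiff h.choose
  else LinearMap.id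
termination_by len w
decreasing_by
  have := len_mul_simpleSwap_of_descent h.choose_spec
  omega

variable {i j : Fin n} {w : Perm (Fin (n + 1))}

theorem ddiff_ddiff_self (i : Fin n) (f : MvPolynomial (Fin (n + 1)) R) :
    ddiff i (ddiff i f) = 0 :=
  dividedDiff_dividedDiff_self _ f

theorem ddiff_mul_of_rename_eq {g : MvPolynomial (Fin (n + 1)) R}
    (hg : rename (simpleSwap i) g = g) (f : MvPolynomial (Fin (n + 1)) R) :
    ddiff i (g * f) = g * ddiff i f :=
  dividedDiff_mul_of_rename_eq _ hg f

theorem ddiff_X_mul (i : Fin n) (b : Fin (n + 1)) (f : MvPolynomial (Fin (n + 1)) R) :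
    ddiff i (X b * f) = X (simpleSwap i b) * ddiff i f +
      ((if b = i.castSucc then 1 else 0) - (if b = i.succ then 1 else 0)) * f := by
  rw [ddiff, dividedDiff_mul, dividedDiff_X, rename_X, add_comm (_ * f), simpleSwap]

theorem ddiff_comm (h : (i : ℕ) + 1 < j) (f : MvPolynomial (Fin (n + 1)) R) :
    ddiff i (ddiff j f) = ddiff j (ddiff i f) := by
  apply dividedDiff_comm <;>
    · rw [Ne, Fin.ext_iff]
      simp only [Fin.val_castSucc, Fin.val_succ]
      omega

theorem ddiff_braid (h : (i : ℕ) + 1 = j) (f : MvPolynomial (Fin (n + 1)) R) :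
    ddiff i (ddiff j (ddiff i f)) = ddiff j (ddiff i (ddiff j f)) := by
  have hij : i.succ = j.castSucc := Fin.ext h
  have hi := (Fin.castSucc_lt_succ (i := i)).ne
  have hj := (Fin.castSucc_lt_succ (i := j)).ne
  have hac : i.castSucc ≠ j.succ := fun e => by simp [Fin.ext_iff] at e; omega
  have key := dividedDiff_braid hi (hij ▸ hj) hac f
  simpa only [ddiff, dividedDiff_congr hij rfl (hij ▸ hj) hj] using key

theorem ddiffPerm_one (f : MvPolynomial (Fin (n + 1)) R) : ddiffPerm 1 f = f := by
  rw [ddiffPerm, dif_neg (by simp [Fin.le_def]), LinearMap.id_apply]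

theorem ddiffPerm_eq_choose (h : ∃ i : Fin n, w i.succ < w i.castSucc)
    (f : MvPolynomial (Fin (n + 1)) R) :
    ddiffPerm w f = ddiffPerm (w * simpleSwap h.choose) (ddiff h.choose f) := by
  rw [ddiffPerm, dif_pos h, LinearMap.comp_apply]

theorem ddiffPerm_comm_of_descents
    (ih : ∀ v : Perm (Fin (n + 1)), len v < len w → ∀ k : Fin n, v k.succ < v k.castSucc →
      ∀ f : MvPolynomial (Fin (n + 1)) R, ddiffPerm v f = ddiffPerm (v * simpleSwap k) (ddiff k f))
    (hij : (i : ℕ) + 1 < j) (hi : w i.succ < w i.castSucc) (hj : w j.succ < w j.castSucc)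
    (f : MvPolynomial (Fin (n + 1)) R) :
    ddiffPerm (w * simpleSwap i) (ddiff i f) = ddiffPerm (w * simpleSwap j) (ddiff j f) := by
  have li := len_mul_simpleSwap_of_descent hi
  have lj := len_mul_simpleSwap_of_descent hj
  have descent_j : (w * simpleSwap i) j.succ < (w * simpleSwap i) j.castSucc := by
    rwa [Perm.mul_apply, Perm.mul_apply,
      simpleSwap_apply_of_lt_or_lt (.inr (by rw [Fin.val_succ]; omega)),
      simpleSwap_apply_of_lt_or_lt (.inr hij)]
  have descent_i : (w * simpleSwap j) i.succ < (w * simpleSwap j) i.castSucc := by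
    rwa [Perm.mul_apply, Perm.mul_apply, simpleSwap_apply_of_lt_or_lt (.inl hij),
      simpleSwap_apply_of_lt_or_lt (.inl (by rw [Fin.val_castSucc]; omega))]
  rw [ih _ (by omega) j descent_j, ih _ (by omega) i descent_i, mul_assoc, mul_assoc,
    simpleSwap_mul_comm hij, ddiff_comm hij]

theorem ddiffPerm_braid_of_descents
    (ih : ∀ v : Perm (Fin (n + 1)), len v < len w → ∀ k : Fin n, v k.succ < v k.castSucc →
      ∀ f : MvPolynomial (Fin (n + 1)) R, ddiffPerm v f = ddiffPerm (v * simpleSwap k) (ddiff k f))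
    (hij : (i : ℕ) + 1 = j) (hi : w i.succ < w i.castSucc) (hj : w j.succ < w j.castSucc)
    (f : MvPolynomial (Fin (n + 1)) R) :
    ddiffPerm (w * simpleSwap i) (ddiff i f) = ddiffPerm (w * simpleSwap j) (ddiff j f) := by
  have hmid : i.succ = j.castSucc := Fin.ext hij
  have hji : simpleSwap i j.succ = j.succ :=
    simpleSwap_apply_of_lt_or_lt (.inr (by rw [Fin.val_succ]; omega))
  have hij' : simpleSwap j i.castSucc = i.castSucc :=
    simpleSwap_apply_of_lt_or_lt (.inl (by rw [Fin.val_castSucc]; omega))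
  have hi_mid : simpleSwap i j.castSucc = i.castSucc := hmid ▸ simpleSwap_succ
  rw [hmid] at hi
  have descent_ij : (w * simpleSwap i) j.succ < (w * simpleSwap i) j.castSucc := by
    simpa only [Perm.mul_apply, hji, hi_mid] using hj.trans hi
  have descent_iji : (w * simpleSwap i * simpleSwap j) i.succ <
      (w * simpleSwap i * simpleSwap j) i.castSucc := by
    simpa only [Perm.mul_apply, hij', simpleSwap_castSucc, hmid, hji] using hj
  have descent_ji : (w * simpleSwap j) i.succ < (w * simpleSwap j) i.castSucc := by
    simpa only [Perm.mul_apply, hij', simpleSwap_castSucc, hmid] using hj.trans hi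
  have descent_jij : (w * simpleSwap j * simpleSwap i) j.succ <
      (w * simpleSwap j * simpleSwap i) j.castSucc := by
    simpa only [Perm.mul_apply, hji, hi_mid, hij', simpleSwap_succ] using hi
  have li := len_mul_simpleSwap_of_descent (hmid ▸ hi : w i.succ < w i.castSucc)
  have lj := len_mul_simpleSwap_of_descent hj
  have lij := len_mul_simpleSwap_of_descent descent_ij
  have lji := len_mul_simpleSwap_of_descent descent_ji
  rw [ih _ (by omega) j descent_ij, ih _ (by omega) i descent_iji, ih _ (by omega) i descent_ji,
    ih _ (by omega) j descent_jij, ddiff_braid hij]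
  simp only [mul_assoc]
  rw [← mul_assoc (simpleSwap i), simpleSwap_braid hij, mul_assoc]

theorem ddiffPerm_of_descent (hj : w j.succ < w j.castSucc) (f : MvPolynomial (Fin (n + 1)) R) :
    ddiffPerm w f = ddiffPerm (w * simpleSwap j) (ddiff j f) := by
  induction hL : len w using Nat.strong_induction_on generalizing w j f with
  | _ L ih =>
    have ih' (v : Perm (Fin (n + 1))) (hv : len v < len w) (k : Fin n)
        (hk : v k.succ < v k.castSucc) (f : MvPolynomial (Fin (n + 1)) R) :=
      ih _ (hL ▸ hv) hk f rfl
    have exchange {i k : Fin n} (hik : i < k) (hi : w i.succ < w i.castSucc)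
        (hk : w k.succ < w k.castSucc) :
        ddiffPerm (w * simpleSwap i) (ddiff i f) = ddiffPerm (w * simpleSwap k) (ddiff k f) := by
      rcases (Nat.succ_le_of_lt hik).lt_or_eq with h | h
      · exact ddiffPerm_comm_of_descents ih' h hi hk f
      · exact ddiffPerm_braid_of_descents ih' h hi hk f
    have hex : ∃ i : Fin n, w i.succ < w i.castSucc := ⟨j, hj⟩
    rw [ddiffPerm_eq_choose hex]
    rcases lt_trichotomy hex.choose j with h | h | h
    · exact exchange h hex.choose_spec hj
    · rw [h]
    · exact (exchange h hj hex.choose_spec).symm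

theorem ddiffPerm_ddiff_of_descent (hj : w j.succ < w j.castSucc)
    (f : MvPolynomial (Fin (n + 1)) R) :
    ddiffPerm w (ddiff j f) = 0 := by
  rw [ddiffPerm_of_descent hj, ddiff_ddiff_self, map_zero]

theorem ddiff_ddiffPerm_of_lt (h : w⁻¹ i.castSucc < w⁻¹ i.succ)
    (f : MvPolynomial (Fin (n + 1)) R) :
    ddiff i (ddiffPerm w f) = ddiffPerm (simpleSwap i * w) f := by
  induction w using perm_descent_induction generalizing f with
  | one =>
    rw [ddiffPerm_one, mul_one, ddiffPerm_of_descent (w := simpleSwap i) (j := i),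
      simpleSwap_mul_self, ddiffPerm_one]
    rw [simpleSwap_succ, simpleSwap_castSucc]
    exact Fin.castSucc_lt_succ
  | descent w j hj ih =>
    have hw : ¬(w j.succ = i.castSucc ∧ w j.castSucc = i.succ) := fun e => by
      rw [← e.1, ← e.2, Perm.inv_def, symm_apply_apply, symm_apply_apply] at h
      exact h.not_gt Fin.castSucc_lt_succ
    have hw_inv : ¬(w⁻¹ i.castSucc = j.castSucc ∧ w⁻¹ i.succ = j.succ) := fun e => by
      rw [Perm.inv_eq_iff_eq, Perm.inv_eq_iff_eq] at e
      rw [← e.1, ← e.2] at hj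
      exact hj.not_gt Fin.castSucc_lt_succ
    rw [ddiffPerm_of_descent hj, ih, ← mul_assoc, ddiffPerm_of_descent (w := simpleSwap i * w)]
    · rw [Perm.mul_apply, Perm.mul_apply]
      exact simpleSwap_lt_simpleSwap hj hw
    · rw [mul_inv_rev, simpleSwap_inv, Perm.mul_apply, Perm.mul_apply]
      exact simpleSwap_lt_simpleSwap h hw_inv

theorem lt_of_descent_of_fix {K : ℕ} (hw : ∀ p : Fin (n + 1), K ≤ p → w p = p)
    (hi : w i.succ < w i.castSucc) : (i : ℕ) + 1 < K := by
  by_contra! hK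
  have hsucc : w i.succ = i.succ := hw _ (by simpa using hK)
  have hcast : K ≤ (w i.castSucc : ℕ) := by
    rw [hsucc, Fin.lt_def, Fin.val_succ] at hi
    omega
  have hfix := w.injective (hw _ hcast)
  rw [hfix, hsucc] at hi
  exact hi.not_gt Fin.castSucc_lt_succ

theorem perm_fix_induction {K : ℕ}
    {P : (w : Perm (Fin (n + 1))) → (∀ p : Fin (n + 1), K ≤ p → w p = p) → Prop}
    (one : P 1 fun _ _ => rfl)
    (descent : ∀ w (i : Fin n) hw hw', (i : ℕ) + 1 < K → w i.succ < w i.castSucc →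
      P (w * simpleSwap i) hw' → P w hw)
    (w : Perm (Fin (n + 1))) (hw : ∀ p : Fin (n + 1), K ≤ p → w p = p) : P w hw := by
  induction w using perm_descent_induction with
  | one => exact one
  | descent w i hi ih =>
    have hK := lt_of_descent_of_fix hw hi
    refine descent w i hw (fun p hp => ?_) hK hi (ih _)
    rw [Perm.mul_apply, simpleSwap_apply_of_lt_or_lt (.inr (hK.trans_le hp)), hw p hp]

theorem ddiffPerm_mul_of_rename_eq {K : ℕ} (hw : ∀ p : Fin (n + 1), K ≤ p → w p = p)
    {g : MvPolynomial (Fin (n + 1)) R}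
    (hg : ∀ i : Fin n, (i : ℕ) + 1 < K → rename (simpleSwap i) g = g)
    (f : MvPolynomial (Fin (n + 1)) R) : ddiffPerm w (g * f) = g * ddiffPerm w f := by
  induction w, hw using perm_fix_induction generalizing f with
  | one => rw [ddiffPerm_one, ddiffPerm_one]
  | descent w i _ _ hK hi ih =>
    rw [ddiffPerm_of_descent hi, ddiff_mul_of_rename_eq (hg i hK), ih, ddiffPerm_of_descent hi]

end PermutationDividedDifference

section Monk

variable {n : ℕ} {R : Type*} [CommRing R] [IsDomain R]
variable {i : Fin n} {u : Perm (Fin (n + 1))}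

/-- The sign with which `t_{b,l}` enters the product rule for `∂_u` and `x_b`. -/
def monkSign (b l : Fin (n + 1)) : ℤ := if b < l then 1 else -1

/-- The term `± ∂_{u t_{b,l}} f` of the product rule for `∂_u (x_b f)`, present when `u` covers
`u t_{b,l}` in Bruhat order. -/
noncomputable def monkTerm (u : Perm (Fin (n + 1))) (b : Fin (n + 1))
    (f : MvPolynomial (Fin (n + 1)) R) (l : Fin (n + 1)) : MvPolynomial (Fin (n + 1)) R :=
  if len (u * swap b l) + 1 = len u then monkSign b l • ddiffPerm (u * swap b l) f else 0

theorem monkSign_simpleSwap {b l : Fin (n + 1)} (h₁ : ¬(b = i.castSucc ∧ l = i.succ))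
    (h₂ : ¬(b = i.succ ∧ l = i.castSucc)) :
    monkSign (simpleSwap i b) (simpleSwap i l) = monkSign b l := by
  rcases lt_trichotomy b l with h | rfl | h
  · rw [monkSign, monkSign, if_pos h, if_pos (simpleSwap_lt_simpleSwap h h₁)]
  · rw [monkSign, monkSign, if_neg (lt_irrefl _), if_neg (lt_irrefl _)]
  · rw [monkSign, monkSign, if_neg h.not_gt,
      if_neg (simpleSwap_lt_simpleSwap h fun e => h₂ e.symm).not_gt]

theorem mul_simpleSwap_mul_swap (u : Perm (Fin (n + 1))) (i : Fin n) (b l : Fin (n + 1)) :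
    u * simpleSwap i * swap (simpleSwap i b) (simpleSwap i l) = u * swap b l * simpleSwap i := by
  rw [mul_assoc, mul_assoc, mul_swap_eq_swap_mul, simpleSwap_simpleSwap, simpleSwap_simpleSwap]

/-- If `u t_{p,q}` had an ascent at `i`, the positions `i`, `i + 1` would witness that it is not
covered by `u`. -/
theorem descent_of_covers_of_lt (hi : u i.succ < u i.castSucc) {p q : Fin (n + 1)} (hpq : p < q)
    (hne : ¬(p = i.castSucc ∧ q = i.succ)) (hcover : len (u * swap p q) + 1 = len u) :
    (u * swap p q) i.succ < (u * swap p q) i.castSucc := by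
  obtain ⟨hqp, hbetween⟩ := (len_mul_swap_add_one_iff hpq).mp hcover
  have hcs : i.castSucc < i.succ := Fin.castSucc_lt_succ
  rw [Perm.mul_apply, Perm.mul_apply]
  rcases eq_or_ne p i.castSucc with rfl | hp
  · have hq : i.succ < q :=
      (Fin.castSucc_lt_iff_succ_le.mp hpq).lt_of_ne fun e => hne ⟨rfl, e.symm⟩
    rw [swap_apply_left, swap_apply_of_ne_of_ne hcs.ne' hq.ne]
    by_contra! hle
    exact hi.not_gt (hbetween _ hcs hq (hle.lt_of_ne (u.injective.ne hq.ne')))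
  rcases eq_or_ne p i.succ with rfl | hp'
  · rw [swap_apply_left, swap_apply_of_ne_of_ne hcs.ne (hcs.trans hpq).ne]
    exact hqp.trans hi
  rcases eq_or_ne q i.castSucc with rfl | hq
  · rw [swap_apply_right, swap_apply_of_ne_of_ne (hpq.trans hcs).ne' hcs.ne']
    exact hi.trans hqp
  rcases eq_or_ne q i.succ with rfl | hq'
  · have hlt : p < i.castSucc := (Fin.le_castSucc_iff.mpr hpq).lt_of_ne hp
    rw [swap_apply_right, swap_apply_of_ne_of_ne hp.symm hq.symm]
    by_contra! hle
    exact (hbetween _ hlt hcs hi).not_ge hle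
  · rwa [swap_apply_of_ne_of_ne hp'.symm hq'.symm, swap_apply_of_ne_of_ne hp.symm hq.symm]

theorem descent_of_covers (hi : u i.succ < u i.castSucc) {b l : Fin (n + 1)}
    (h₁ : ¬(b = i.castSucc ∧ l = i.succ)) (h₂ : ¬(b = i.succ ∧ l = i.castSucc))
    (hcover : len (u * swap b l) + 1 = len u) :
    (u * swap b l) i.succ < (u * swap b l) i.castSucc := by
  rcases lt_trichotomy b l with h | rfl | h
  · exact descent_of_covers_of_lt hi h h₁ hcover
  · rwa [show swap b b = 1 from swap_self b, mul_one]
  · rw [swap_comm] at hcover ⊢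
    exact descent_of_covers_of_lt hi h (fun e => h₂ e.symm) hcover

theorem monkTerm_eq_monkTerm_simpleSwap (hi : u i.succ < u i.castSucc) {b l : Fin (n + 1)}
    (h₁ : ¬(b = i.castSucc ∧ l = i.succ)) (h₂ : ¬(b = i.succ ∧ l = i.castSucc))
    (f : MvPolynomial (Fin (n + 1)) R) :
    monkTerm u b f l =
      monkTerm (u * simpleSwap i) (simpleSwap i b) (ddiff i f) (simpleSwap i l) := by
  rw [monkTerm, monkTerm, mul_simpleSwap_mul_swap, monkSign_simpleSwap h₁ h₂]
  have hu := len_mul_simpleSwap_of_descent hi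
  rcases lt_or_gt_castSucc_succ (u * swap b l) i with h | h
  · have hzero : ddiffPerm (u * swap b l * simpleSwap i) (ddiff i f) = 0 := by
      apply ddiffPerm_ddiff_of_descent
      simpa only [Perm.mul_apply, simpleSwap_succ, simpleSwap_castSucc] using h
    rw [if_neg fun e => (descent_of_covers hi h₁ h₂ e).not_gt h, hzero, smul_zero, ite_self]
  · have hv := len_mul_simpleSwap_of_descent h
    have hiff : len (u * swap b l * simpleSwap i) + 1 = len (u * simpleSwap i) ↔
        len (u * swap b l) + 1 = len u := by omega
    rw [ddiffPerm_of_descent h, if_congr hiff rfl rfl]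

theorem monkTerm_swap_self (hi : u i.succ < u i.castSucc) {b l : Fin (n + 1)}
    (hbl : swap b l = simpleSwap i) (f : MvPolynomial (Fin (n + 1)) R) :
    monkTerm u b f l = monkSign b l • ddiffPerm (u * simpleSwap i) f := by
  rw [monkTerm, hbl, if_pos (len_mul_simpleSwap_of_descent hi)]

theorem monkTerm_simpleSwap_eq_zero (hi : u i.succ < u i.castSucc) {b l : Fin (n + 1)}
    (hbl : swap b l = simpleSwap i) (f : MvPolynomial (Fin (n + 1)) R) :
    monkTerm (u * simpleSwap i) b f l = 0 := by
  have := len_mul_simpleSwap_of_descent hi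
  rw [monkTerm, hbl, mul_simpleSwap_mul_simpleSwap, if_neg (by omega)]

theorem sum_monkTerm_of_descent (hi : u i.succ < u i.castSucc) (b : Fin (n + 1))
    (f : MvPolynomial (Fin (n + 1)) R) :
    ∑ l, monkTerm u b f l =
      ∑ l, monkTerm (u * simpleSwap i) (simpleSwap i b) (ddiff i f) l +
        ((if b = i.castSucc then 1 else 0) - (if b = i.succ then 1 else 0)) *
          ddiffPerm (u * simpleSwap i) f := by
  have hcs : i.castSucc < i.succ := Fin.castSucc_lt_succ
  rw [← sub_eq_iff_eq_add', ← Equiv.sum_comp (simpleSwap i) (monkTerm (u * simpleSwap i) _ _),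
    ← Finset.sum_sub_distrib]
  rcases eq_or_ne b i.castSucc with rfl | hb
  · rw [Finset.sum_eq_single i.succ, monkTerm_swap_self hi rfl, simpleSwap_castSucc,
      simpleSwap_succ, monkTerm_simpleSwap_eq_zero hi (swap_comm _ _)]
    · simp [monkSign, hcs, hcs.ne]
    · exact fun l _ hl => sub_eq_zero.mpr
        (monkTerm_eq_monkTerm_simpleSwap hi (fun e => hl e.2) (fun e => hcs.ne e.1) f)
    · simp
  rcases eq_or_ne b i.succ with rfl | hb'
  · rw [Finset.sum_eq_single i.castSucc, monkTerm_swap_self hi (swap_comm _ _), simpleSwap_castSucc,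
      simpleSwap_succ, monkTerm_simpleSwap_eq_zero hi rfl]
    · simp [monkSign, hcs.le, hcs.ne']
    · exact fun l _ hl => sub_eq_zero.mpr
        (monkTerm_eq_monkTerm_simpleSwap hi (fun e => hcs.ne' e.1) (fun e => hl e.2) f)
    · simp
  · rw [if_neg hb, if_neg hb', sub_zero, zero_mul]
    exact Finset.sum_eq_zero fun l _ => sub_eq_zero.mpr
      (monkTerm_eq_monkTerm_simpleSwap hi (fun e => hb e.1) (fun e => hb' e.1) f)

theorem ddiffPerm_X_mul (u : Perm (Fin (n + 1))) (b : Fin (n + 1))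
    (f : MvPolynomial (Fin (n + 1)) R) :
    ddiffPerm u (X b * f) = X (u b) * ddiffPerm u f + ∑ l, monkTerm u b f l := by
  induction u using perm_descent_induction generalizing b f with
  | one =>
    rw [ddiffPerm_one, ddiffPerm_one, Finset.sum_eq_zero, add_zero, Perm.one_apply]
    intro l _
    rw [monkTerm, len_one, if_neg (Nat.succ_ne_zero _)]
  | descent u i hi ih =>
    have hconst : ddiffPerm (u * simpleSwap i)
        (((if b = i.castSucc then 1 else 0) - (if b = i.succ then 1 else 0)) * f) =
        ((if b = i.castSucc then 1 else 0) - (if b = i.succ then 1 else 0)) *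
          ddiffPerm (u * simpleSwap i) f := by
      split_ifs <;> simp
    rw [ddiffPerm_of_descent hi, ddiff_X_mul, map_add, ih, hconst, Perm.mul_apply,
      simpleSwap_simpleSwap, ← ddiffPerm_of_descent hi, sum_monkTerm_of_descent hi, add_assoc]

/-- The functional `f ↦ (∂_u f)(0)`, which reads off the coefficient of the Schubert class of `u`
in the class of `f`. -/
noncomputable def schubertCoeff (u : Perm (Fin (n + 1))) :
    MvPolynomial (Fin (n + 1)) R →ₗ[R] R :=
  lcoeff R 0 ∘ₗ ddiffPerm u

theorem schubertCoeff_apply (u : Perm (Fin (n + 1))) (f : MvPolynomial (Fin (n + 1)) R) :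
    schubertCoeff u f = constantCoeff (ddiffPerm u f) := rfl

theorem schubertCoeff_X_mul (u : Perm (Fin (n + 1))) (b : Fin (n + 1))
    (f : MvPolynomial (Fin (n + 1)) R) :
    schubertCoeff u (X b * f) = ∑ l, if len (u * swap b l) + 1 = len u then
      monkSign b l • schubertCoeff (u * swap b l) f else 0 := by
  rw [schubertCoeff_apply, ddiffPerm_X_mul, map_add, map_mul, constantCoeff_X, zero_mul, zero_add,
    map_sum]
  refine Finset.sum_congr rfl fun l _ => ?_
  rw [monkTerm, apply_ite constantCoeff, map_zsmul, map_zero, schubertCoeff_apply]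

theorem schubertCoeff_mul_eq_zero {g : MvPolynomial (Fin (n + 1)) R}
    (hg : ∀ u, schubertCoeff u g = 0) (f : MvPolynomial (Fin (n + 1)) R)
    (u : Perm (Fin (n + 1))) : schubertCoeff u (f * g) = 0 := by
  induction f using MvPolynomial.induction_on generalizing u with
  | C a => rw [← smul_eq_C_mul, map_smul, hg, smul_zero]
  | add p q hp hq => rw [add_mul, map_add, hp, hq, add_zero]
  | mul_X p i hp =>
    rw [mul_comm p, mul_assoc, schubertCoeff_X_mul]
    simp only [hp, smul_zero, ite_self, Finset.sum_const_zero]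

end Monk

section SchubertPolynomial

variable {n : ℕ} {i : Fin n} {u v w : Perm (Fin (n + 1))}

theorem pos_val_add_one (p : Fin (n + 1)) : pos (n + 1) ((p : ℕ) + 1) = p :=
  Fin.ext (Nat.mod_eq_of_lt p.2)

theorem pos_val_castSucc_add_one (i : Fin n) : pos (n + 1) ((i : ℕ) + 1) = i.castSucc :=
  pos_val_add_one i.castSucc

theorem pos_val_succ_add_one (i : Fin n) : pos (n + 1) ((i : ℕ) + 1 + 1) = i.succ :=
  pos_val_add_one i.succ

theorem t_val_add_one (i : Fin n) : t (n + 1) ((i : ℕ) + 1) ((i : ℕ) + 1 + 1) = simpleSwap i := by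
  rw [t, pos_val_castSucc_add_one, pos_val_succ_add_one, simpleSwap]

theorem val_lt_val_iff (w : Perm (Fin (n + 1))) (i : Fin n) :
    val w ((i : ℕ) + 1 + 1) < val w ((i : ℕ) + 1) ↔ w i.succ < w i.castSucc := by
  rw [val, val, pos_val_castSucc_add_one, pos_val_succ_add_one, Fin.lt_def,
    Nat.add_lt_add_iff_right]

theorem divDiff_eq_ddiff (i : Fin n) (f : MvPolynomial (Fin (n + 1)) ℤ) :
    divDiff ((i : ℕ) + 1) f = ddiff i f := by
  rw [divDiff, t_val_add_one, pos_val_castSucc_add_one, pos_val_succ_add_one]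
  have hdvd := X_sub_X_dvd_sub_rename_swap i.castSucc i.succ f
  exact (dif_pos hdvd).trans (dividedDiff_eq_of_mul_eq _ hdvd.choose_spec.symm).symm

theorem divDiffWord_redWordAux {fuel : ℕ} (hw : len w ≤ fuel)
    (f : MvPolynomial (Fin (n + 1)) ℤ) :
    divDiffWord (redWordAux (n + 1) fuel w) f = ddiffPerm w f := by
  induction fuel generalizing w f with
  | zero =>
    rw [perm_eq_one_of_len_eq_zero (Nat.le_zero.mp hw), ddiffPerm_one, redWordAux, divDiffWord,
      List.foldr_nil]
  | succ fuel ih =>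
    rw [redWordAux]
    split
    case h_1 hnone =>
      have hw : w = 1 := perm_eq_one_of_forall_ascent fun i => by
        refine (lt_or_gt_castSucc_succ w i).resolve_right fun h => ?_
        refine List.find?_eq_none.mp hnone ((i : ℕ) + 1) ?_ ?_
        · simp
        · exact decide_eq_true ((val_lt_val_iff w i).mpr h)
      rw [hw, ddiffPerm_one, divDiffWord, List.foldr_nil]
    case h_2 j hj =>
      obtain ⟨m, hm, rfl⟩ := List.mem_map.mp (List.mem_of_find?_eq_some hj)
      obtain ⟨i, rfl⟩ : ∃ i : Fin n, (i : ℕ) = m := ⟨⟨m, List.mem_range.mp hm⟩, rfl⟩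
      have hi : w i.succ < w i.castSucc :=
        (val_lt_val_iff w i).mp (by simpa only [decide_eq_true_eq] using List.find?_some hj)
      have hlen := len_mul_simpleSwap_of_descent hi
      rw [t_val_add_one, ddiffPerm_of_descent hi, ← ih (by omega), divDiffWord, List.foldr_append,
        List.foldr_cons, List.foldr_nil, divDiff_eq_ddiff, divDiffWord]

theorem schubertPoly_eq_ddiffPerm (w : Perm (Fin (n + 1))) :
    schubertPoly (n + 1) w = ddiffPerm (w⁻¹ * w0 (n + 1)) (staircase (n + 1)) :=
  divDiffWord_redWordAux (len_le _) _

theorem w0_mul_w0 (N : ℕ) : w0 N * w0 N = 1 := inv_mul_cancel (w0 N)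

theorem schubertPoly_w0 (n : ℕ) : schubertPoly (n + 1) (w0 (n + 1)) = staircase (n + 1) := by
  rw [schubertPoly_eq_ddiffPerm, inv_mul_cancel, ddiffPerm_one]

theorem ddiff_schubertPoly_of_descent (h : w i.succ < w i.castSucc) :
    ddiff i (schubertPoly (n + 1) w) = schubertPoly (n + 1) (w * simpleSwap i) := by
  rw [schubertPoly_eq_ddiffPerm, schubertPoly_eq_ddiffPerm, mul_inv_rev, simpleSwap_inv, mul_assoc]
  apply ddiff_ddiffPerm_of_lt
  rw [mul_inv_rev, inv_inv]
  exact Fin.rev_lt_rev.mpr h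

theorem ddiff_schubertPoly_of_ascent (h : w i.castSucc < w i.succ) :
    ddiff i (schubertPoly (n + 1) w) = 0 := by
  rw [← mul_simpleSwap_mul_simpleSwap w i, ← ddiff_schubertPoly_of_descent, ddiff_ddiff_self]
  simpa only [Perm.mul_apply, simpleSwap_succ, simpleSwap_castSucc] using h

theorem exists_ascent_of_ne_w0 (h : u ≠ w0 (n + 1)) : ∃ i : Fin n, u i.castSucc < u i.succ := by
  have hne : w0 (n + 1) * u ≠ 1 := fun e => h <| by
    rw [← one_mul u, ← w0_mul_w0, mul_assoc, e, mul_one]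
  obtain ⟨i, hi⟩ := exists_descent_of_ne_one hne
  exact ⟨i, Fin.rev_lt_rev.mp hi⟩

theorem len_lt_len_w0 (h : u ≠ w0 (n + 1)) : len u < len (w0 (n + 1)) := by
  obtain ⟨i, hi⟩ := exists_ascent_of_ne_w0 h
  refine Finset.card_lt_card ((Finset.ssubset_iff_of_subset ?_).mpr ⟨(i.castSucc, i.succ), ?_, ?_⟩)
  · rintro ⟨p, q⟩ hpq
    exact mem_inversions.mpr
      ⟨(mem_inversions.mp hpq).1, Fin.rev_lt_rev.mpr (mem_inversions.mp hpq).1⟩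
  · exact mem_inversions.mpr ⟨Fin.castSucc_lt_succ, Fin.rev_lt_rev.mpr Fin.castSucc_lt_succ⟩
  · exact fun hmem => (mem_inversions.mp hmem).2.not_gt hi

/-- The entry at `p` of the Lehmer code of `v`: the number of inversions with first position `p`. -/
def lehmerCode (v : Perm (Fin (n + 1))) (p : Fin (n + 1)) : ℕ :=
  (Finset.univ.filter fun j => p < j ∧ v j < v p).card

theorem lehmerCode_w0 (p : Fin (n + 1)) : lehmerCode (w0 (n + 1)) p = n - p := by
  have hset : (Finset.univ.filter fun j => p < j ∧ w0 (n + 1) j < w0 (n + 1) p) = Finset.Ioi p := by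
    ext j
    simp [w0, Fin.rev_lt_rev]
  rw [lehmerCode, hset, Fin.card_Ioi]
  omega

theorem lehmerCode_one (p : Fin (n + 1)) : lehmerCode 1 p = 0 := by
  rw [lehmerCode, Finset.card_eq_zero, Finset.filter_eq_empty_iff]
  exact fun j _ h => h.1.not_gt h.2

theorem lehmerCode_succ_lt_of_descent (h : v i.succ < v i.castSucc) :
    lehmerCode v i.succ < lehmerCode v i.castSucc := by
  refine Finset.card_lt_card ((Finset.ssubset_iff_of_subset fun j hj => ?_).mpr ⟨i.succ, ?_, ?_⟩)
  · simp only [Finset.mem_filter, Finset.mem_univ, true_and] at hj ⊢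
    exact ⟨Fin.castSucc_lt_succ.trans hj.1, hj.2.trans h⟩
  · simp [h]
  · simp

theorem lehmerCode_castSucc_le_of_ascent (h : v i.castSucc < v i.succ) :
    lehmerCode v i.castSucc ≤ lehmerCode v i.succ := by
  refine Finset.card_le_card fun j hj => ?_
  simp only [Finset.mem_filter, Finset.mem_univ, true_and] at hj ⊢
  refine ⟨(Fin.castSucc_lt_iff_succ_le.mp hj.1).lt_of_ne ?_, hj.2.trans h⟩
  rintro rfl
  exact hj.2.not_gt h

theorem lehmerCode_mul_simpleSwap_castSucc (h : v i.castSucc < v i.succ) :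
    lehmerCode (v * simpleSwap i) i.castSucc = lehmerCode v i.succ + 1 := by
  have hset : (Finset.univ.filter fun j => i.castSucc < j ∧
      (v * simpleSwap i) j < (v * simpleSwap i) i.castSucc) =
      insert i.succ (Finset.univ.filter fun j => i.succ < j ∧ v j < v i.succ) := by
    ext j
    simp only [Finset.mem_filter, Finset.mem_univ, true_and, Finset.mem_insert, Perm.mul_apply,
      simpleSwap_castSucc, Fin.castSucc_lt_iff_succ_le]
    rcases lt_trichotomy j i.succ with hj | rfl | hj
    · simp [hj.not_ge, hj.ne, hj.not_gt]
    · simp [simpleSwap_succ, h]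
    · rw [simpleSwap_apply_of_lt_or_lt (.inr (Fin.lt_def.mp hj))]
      simp [hj.le, hj, hj.ne']
  rw [lehmerCode, hset, Finset.card_insert_of_notMem (by simp), lehmerCode]

theorem lehmerCode_mul_simpleSwap_of_ne (h : v i.castSucc < v i.succ) {p : Fin (n + 1)}
    (hp : p ≠ i.castSucc) :
    lehmerCode (v * simpleSwap i) p = lehmerCode v (simpleSwap i p) := by
  rw [lehmerCode, lehmerCode]
  refine Finset.card_equiv (simpleSwap i) fun j => ?_
  rw [Finset.mem_filter_univ, Finset.mem_filter_univ]
  refine and_congr_left fun hlt => ⟨fun hpj => ?_, fun hpj => ?_⟩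
  · exact simpleSwap_lt_simpleSwap hpj fun e => hp e.1
  · rw [← simpleSwap_simpleSwap i p, ← simpleSwap_simpleSwap i j]
    refine simpleSwap_lt_simpleSwap hpj fun e => ?_
    rw [Perm.mul_apply, Perm.mul_apply, e.1, e.2] at hlt
    exact hlt.not_gt h

theorem lehmerCode_mul_simpleSwap (h : v i.castSucc < v i.succ)
    (hcode : lehmerCode v i.castSucc = lehmerCode v i.succ) (p : Fin (n + 1)) :
    lehmerCode (v * simpleSwap i) p = lehmerCode v p + if p = i.castSucc then 1 else 0 := by
  split_ifs with hp
  · rw [hp, lehmerCode_mul_simpleSwap_castSucc h, hcode]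
  · rw [lehmerCode_mul_simpleSwap_of_ne h hp, simpleSwap, apply_swap_eq_self hcode, add_zero]

/-- Permutations with weakly decreasing Lehmer code; their Schubert polynomials are monomials. -/
def IsDominant (v : Perm (Fin (n + 1))) : Prop :=
  Antitone (lehmerCode v)

theorem IsDominant.lehmerCode_castSucc_eq (hv : IsDominant v) (h : v i.castSucc < v i.succ) :
    lehmerCode v i.castSucc = lehmerCode v i.succ :=
  (lehmerCode_castSucc_le_of_ascent h).antisymm (hv Fin.castSucc_lt_succ.le)

theorem IsDominant.exists_mul_simpleSwap (hv : IsDominant v) (hne : v ≠ w0 (n + 1)) :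
    ∃ i : Fin n, v i.castSucc < v i.succ ∧ IsDominant (v * simpleSwap i) := by
  obtain ⟨i, hi, hmin⟩ := WellFounded.has_min (wellFounded_lt (α := Fin n))
    {i | v i.castSucc < v i.succ} (exists_ascent_of_ne_w0 hne)
  refine ⟨i, hi, Fin.antitone_iff_succ_le.mpr fun j => ?_⟩
  rw [lehmerCode_mul_simpleSwap hi (hv.lehmerCode_castSucc_eq hi),
    lehmerCode_mul_simpleSwap hi (hv.lehmerCode_castSucc_eq hi)]
  refine le_trans ?_ (Nat.le_add_right _ _)
  split_ifs with h
  · have hji : j < i := Fin.lt_def.mpr (by simpa using (Fin.ext_iff.mp h).le)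
    have hj := (lt_or_gt_castSucc_succ v j).resolve_left fun hj => hmin j hj hji
    exact lehmerCode_succ_lt_of_descent hj
  · exact hv Fin.castSucc_lt_succ.le

theorem ddiff_prod_X_pow {e e' : Fin (n + 1) → ℕ} (he : e i.castSucc = e i.succ)
    (he' : ∀ p, e' p = e p + if p = i.castSucc then 1 else 0) :
    ddiff i (∏ p, X p ^ e' p) = (∏ p, X p ^ e p : MvPolynomial (Fin (n + 1)) ℤ) := by
  have hprod : (∏ p, X p ^ e' p : MvPolynomial (Fin (n + 1)) ℤ) =
      X i.castSucc * ∏ p, X p ^ e p := by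
    simp only [he', pow_add, Finset.prod_mul_distrib]
    simp [mul_comm, pow_ite]
  have hinv : rename (simpleSwap i) (∏ p, X p ^ e p : MvPolynomial (Fin (n + 1)) ℤ) =
      ∏ p, X p ^ e p := by
    simp only [map_prod, map_pow, rename_X]
    refine Fintype.prod_equiv (simpleSwap i) _ _ fun p => ?_
    rw [simpleSwap, apply_swap_eq_self he]
  rw [hprod, ddiff_X_mul, ddiff, dividedDiff_eq_zero _ hinv, mul_zero, zero_add, if_pos rfl,
    if_neg Fin.castSucc_lt_succ.ne, sub_zero, one_mul]

theorem IsDominant.schubertPoly_eq (hv : IsDominant v) :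
    schubertPoly (n + 1) v = ∏ p, X p ^ lehmerCode v p := by
  induction hd : len (w0 (n + 1)) - len v using Nat.strong_induction_on generalizing v with
  | _ d ih =>
    rcases eq_or_ne v (w0 (n + 1)) with rfl | hne
    · simp only [schubertPoly_w0, staircase, lehmerCode_w0, Nat.add_sub_cancel]
    obtain ⟨i, hi, hvi⟩ := hv.exists_mul_simpleSwap hne
    have hdesc : (v * simpleSwap i) i.succ < (v * simpleSwap i) i.castSucc := by
      simpa only [Perm.mul_apply, simpleSwap_succ, simpleSwap_castSucc] using hi
    have hlen := len_mul_simpleSwap_of_descent hdesc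
    rw [mul_simpleSwap_mul_simpleSwap] at hlen
    have hlt := len_lt_len_w0 hne
    have hcode := hv.lehmerCode_castSucc_eq hi
    rw [← mul_simpleSwap_mul_simpleSwap v i, ← ddiff_schubertPoly_of_descent hdesc,
      ih _ (by omega) hvi rfl, ddiff_prod_X_pow hcode (lehmerCode_mul_simpleSwap hi hcode),
      mul_simpleSwap_mul_simpleSwap]

theorem schubertPoly_one (n : ℕ) : schubertPoly (n + 1) 1 = 1 := by
  have h : IsDominant (1 : Perm (Fin (n + 1))) := fun p q _ => by
    rw [lehmerCode_one, lehmerCode_one]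
  rw [h.schubertPoly_eq]
  simp only [lehmerCode_one, pow_zero, Finset.prod_const_one]

end SchubertPolynomial

theorem prod_map_X {σ R : Type*} [CommSemiring R] (s : Multiset σ) :
    (s.map X).prod = (monomial s.toFinsupp 1 : MvPolynomial σ R) := by
  induction s using Multiset.induction_on with
  | empty => simp
  | cons b s ih =>
    rw [Multiset.map_cons, Multiset.prod_cons, ih, ← Multiset.singleton_add, map_add,
      Multiset.toFinsupp_singleton, X, monomial_mul, one_mul]

theorem eq_sum_coeff_smul_prod_map_X {σ R : Type*} [CommSemiring R] (f : MvPolynomial σ R) :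
    f = ∑ e ∈ f.support, coeff e f • (e.toMultiset.map X).prod := by
  conv_lhs => rw [f.as_sum]
  refine Finset.sum_congr rfl fun e _ => ?_
  rw [prod_map_X, Finsupp.toMultiset_toFinsupp, smul_monomial, smul_eq_mul, mul_one]

section DualBasis

variable {n : ℕ} {u : Perm (Fin (n + 1))}

section

variable {R : Type*} [CommRing R] [IsDomain R]

theorem ddiffPerm_eq_zero_of_ne_one {f : MvPolynomial (Fin (n + 1)) R}
    (hf : ∀ i : Fin n, ddiff i f = 0) (hu : u ≠ 1) : ddiffPerm u f = 0 := by
  obtain ⟨i, hi⟩ := exists_descent_of_ne_one hu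
  rw [ddiffPerm_of_descent hi, hf, map_zero]

theorem schubertCoeff_one (u : Perm (Fin (n + 1))) :
    schubertCoeff u (1 : MvPolynomial (Fin (n + 1)) R) = if u = 1 then 1 else 0 := by
  rw [schubertCoeff_apply]
  split_ifs with hu
  · rw [hu, ddiffPerm_one, map_one]
  · rw [ddiffPerm_eq_zero_of_ne_one (fun i => dividedDiff_eq_zero _ (map_one _)) hu, map_zero]

theorem schubertCoeff_prod_map_X_eq_zero {s : Multiset (Fin (n + 1))} (h : len u ≠ s.card) :
    schubertCoeff u ((s.map X).prod : MvPolynomial (Fin (n + 1)) R) = 0 := by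
  induction s using Multiset.induction_on generalizing u with
  | empty =>
    rw [Multiset.map_zero, Multiset.prod_zero, schubertCoeff_one, if_neg]
    rintro rfl
    exact h len_one
  | cons b s ih =>
    rw [Multiset.map_cons, Multiset.prod_cons, schubertCoeff_X_mul]
    refine Finset.sum_eq_zero fun l _ => ?_
    split_ifs with hl
    · rw [Multiset.card_cons] at h
      rw [ih (by omega), smul_zero]
    · rfl

theorem schubertCoeff_eq_zero_of_isHomogeneous {f : MvPolynomial (Fin (n + 1)) R} {d : ℕ}
    (hf : f.IsHomogeneous d) (hu : len u ≠ d) : schubertCoeff u f = 0 := by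
  rw [eq_sum_coeff_smul_prod_map_X f, map_sum]
  refine Finset.sum_eq_zero fun e he => ?_
  rw [map_smul, schubertCoeff_prod_map_X_eq_zero, smul_zero]
  rwa [Finsupp.card_toMultiset, show e.sum (fun _ => id) = d from
    (hf.degree_eq_sum_deg_support he).symm]

end

theorem isHomogeneous_staircase (N : ℕ) :
    (staircase N).IsHomogeneous (∑ i : Fin N, (N - 1 - (i : ℕ))) :=
  IsHomogeneous.prod _ _ _ fun i _ => isHomogeneous_X_pow i _

theorem schubertCoeff_w0_staircase (n : ℕ) :
    schubertCoeff (w0 (n + 1)) (staircase (n + 1)) = 1 := by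
  have h := schubertPoly_one n
  rw [schubertPoly_eq_ddiffPerm, inv_one, one_mul] at h
  rw [schubertCoeff_apply, h, map_one]

theorem schubertCoeff_staircase (u : Perm (Fin (n + 1))) :
    schubertCoeff u (staircase (n + 1)) = if u = w0 (n + 1) then 1 else 0 := by
  split_ifs with hu
  · rw [hu, schubertCoeff_w0_staircase]
  · apply schubertCoeff_eq_zero_of_isHomogeneous (isHomogeneous_staircase _)
    have hw0 : len (w0 (n + 1)) = ∑ i : Fin (n + 1), (n + 1 - 1 - (i : ℕ)) := by
      by_contra hne
      exact one_ne_zero ((schubertCoeff_w0_staircase n).symm.trans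
        (schubertCoeff_eq_zero_of_isHomogeneous (isHomogeneous_staircase _) hne))
    rw [← hw0]
    exact (len_lt_len_w0 hu).ne

theorem schubertCoeff_schubertPoly (u w : Perm (Fin (n + 1))) :
    schubertCoeff u (schubertPoly (n + 1) w) = if u = w then 1 else 0 := by
  induction u using perm_descent_induction generalizing w with
  | one =>
    rw [schubertCoeff_apply, ddiffPerm_one, schubertPoly_eq_ddiffPerm, ← schubertCoeff_apply,
      schubertCoeff_staircase]
    exact if_congr (by rw [mul_eq_right, inv_eq_one, eq_comm]) rfl rfl
  | descent u i hi ih =>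
    rw [schubertCoeff_apply, ddiffPerm_of_descent hi]
    rcases lt_or_gt_castSucc_succ w i with h | h
    · rw [ddiff_schubertPoly_of_ascent h, map_zero, map_zero, if_neg]
      rintro rfl
      exact h.not_gt hi
    · rw [ddiff_schubertPoly_of_descent h, ← schubertCoeff_apply, ih]
      exact if_congr (mul_left_inj _) rfl rfl

theorem schubertCoeff_eq_zero_of_mem_symIdeal {f : MvPolynomial (Fin (n + 1)) ℤ}
    (hf : f ∈ symIdeal (n + 1)) (u : Perm (Fin (n + 1))) : schubertCoeff u f = 0 := by
  induction hf using Submodule.span_induction generalizing u with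
  | mem f h =>
    obtain ⟨hsymm, hconst⟩ := h
    rw [schubertCoeff_apply]
    rcases eq_or_ne u 1 with rfl | hu
    · rw [ddiffPerm_one, hconst]
    · rw [ddiffPerm_eq_zero_of_ne_one (fun i => dividedDiff_eq_zero _ (hsymm _)) hu, map_zero]
  | zero => rw [map_zero]
  | add f g _ _ hf hg => rw [map_add, hf, hg, add_zero]
  | smul a f _ h => exact schubertCoeff_mul_eq_zero h a u

theorem structure_constant_eq_schubertCoeff {w v : Perm (Fin (n + 1))}
    {c : Perm (Fin (n + 1)) → ℤ}
    (hc : SS (n + 1) w * SS (n + 1) v = ∑ u, c u • SS (n + 1) u) (u : Perm (Fin (n + 1))) :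
    c u = schubertCoeff u (schubertPoly (n + 1) w * schubertPoly (n + 1) v) := by
  simp only [SS, ← map_mul, ← map_zsmul, ← map_sum] at hc
  have h := schubertCoeff_eq_zero_of_mem_symIdeal (Ideal.Quotient.eq.mp hc) u
  simp only [map_sub, map_sum, map_zsmul, schubertCoeff_schubertPoly, smul_eq_mul, mul_ite,
    mul_one, mul_zero, Finset.sum_ite_eq, Finset.mem_univ, if_true] at h
  exact (sub_eq_zero.mp h).symm

end DualBasis

section CompleteHomogeneous

variable {σ R : Type*} [DecidableEq σ] [CommRing R]

/-- The complete homogeneous symmetric polynomial of degree `d` in the variables indexed by `S`;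
as in `hPolyZ`, the degree is an integer and `h_d = 0` for `d < 0`. -/
noncomputable def hsymmOn (S : Finset σ) (d : ℤ) : MvPolynomial σ R :=
  if 0 ≤ d then ∑ s ∈ S.sym d.toNat, ((s : Multiset σ).map X).prod else 0

theorem hsymmOn_natCast (S : Finset σ) (m : ℕ) :
    (hsymmOn S m : MvPolynomial σ R) = ∑ s ∈ S.sym m, ((s : Multiset σ).map X).prod :=
  if_pos m.cast_nonneg

theorem hsymmOn_of_neg (S : Finset σ) {d : ℤ} (hd : d < 0) :
    (hsymmOn S d : MvPolynomial σ R) = 0 :=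
  if_neg hd.not_ge

theorem hsymmOn_zero (S : Finset σ) : (hsymmOn S 0 : MvPolynomial σ R) = 1 := by
  rw [← Nat.cast_zero, hsymmOn_natCast, Finset.sym_zero, Finset.sum_singleton]
  rfl

theorem sym_insert_succ {S : Finset σ} (q : σ) (m : ℕ) :
    (insert q S).sym (m + 1) = S.sym (m + 1) ∪ ((insert q S).sym m).image (Sym.cons q) := by
  ext s
  simp only [Finset.mem_union, Finset.mem_image, Finset.mem_sym_iff]
  constructor
  · intro h
    by_cases hq : q ∈ s
    · exact .inr ⟨s.erase q hq, fun a ha => h a (Multiset.mem_of_mem_erase ha), Sym.cons_erase hq⟩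
    · exact .inl fun a ha => Finset.mem_of_mem_insert_of_ne (h a ha) fun e => hq (e ▸ ha)
  · rintro (h | ⟨s, hs, rfl⟩) a ha
    · exact Finset.mem_insert_of_mem (h a ha)
    · rcases Sym.mem_cons.mp ha with rfl | ha
      · exact Finset.mem_insert_self _ _
      · exact hs a ha

theorem hsymmOn_insert {S : Finset σ} {q : σ} (hq : q ∉ S) (d : ℤ) :
    (hsymmOn (insert q S) d : MvPolynomial σ R) =
      hsymmOn S d + X q * hsymmOn (insert q S) (d - 1) := by
  obtain hd | rfl | hd := lt_trichotomy d 0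
  · simp only [hsymmOn_of_neg _ hd, hsymmOn_of_neg _ (show d - 1 < 0 by omega), mul_zero, add_zero]
  · rw [hsymmOn_zero, hsymmOn_zero, hsymmOn_of_neg _ (by omega), mul_zero, add_zero]
  · obtain ⟨m, rfl⟩ : ∃ m : ℕ, d = (m + 1 : ℕ) := ⟨(d - 1).toNat, by omega⟩
    have hdisj : Disjoint (S.sym (m + 1)) (((insert q S).sym m).image (Sym.cons q)) := by
      refine Finset.disjoint_left.mpr fun s hs h => ?_
      obtain ⟨s, -, rfl⟩ := Finset.mem_image.mp h
      exact hq (Finset.mem_sym_iff.mp hs q (Sym.mem_cons_self _ _))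
    rw [Nat.cast_succ, add_sub_cancel_right, ← Nat.cast_succ, hsymmOn_natCast, hsymmOn_natCast,
      hsymmOn_natCast, sym_insert_succ, Finset.sum_union hdisj,
      Finset.sum_image fun _ _ _ _ h => (Sym.cons_inj_right q _ _).mp h, Finset.mul_sum]
    simp only [Sym.coe_cons, Multiset.map_cons, Multiset.prod_cons]

theorem hsymmOn_singleton (p : σ) (m : ℕ) : (hsymmOn {p} m : MvPolynomial σ R) = X p ^ m := by
  rw [hsymmOn_natCast, Finset.sym_singleton, Finset.sum_singleton, Sym.coe_replicate,
    Multiset.map_replicate, Multiset.prod_replicate]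

theorem exists_hsymmOn_eq_sum_union (S : Finset σ) {T : Finset σ} (h : Disjoint S T) :
    ∃ M : ℕ → MvPolynomial σ R, ∀ d : ℤ,
      hsymmOn T d = ∑ j ∈ Finset.range (S.card + 1), hsymmOn (S ∪ T) (d - j) * M j := by
  induction S using Finset.induction_on with
  | empty => exact ⟨fun _ => 1, fun d => by simp⟩
  | insert q S hq ih =>
    rw [Finset.disjoint_insert_left] at h
    obtain ⟨M, hM⟩ := ih h.2
    have hins (d : ℤ) := hsymmOn_insert (R := R) (S := S ∪ T) (q := q) (by simp [hq, h.1]) d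
    refine ⟨fun j => (if j < S.card + 1 then M j else 0) - (if j = 0 then 0 else X q * M (j - 1)),
      fun d => ?_⟩
    rw [Finset.card_insert_of_notMem hq, Finset.insert_union, hM d]
    simp only [mul_sub, Finset.sum_sub_distrib]
    rw [Finset.sum_range_succ _ (S.card + 1), if_neg (lt_irrefl _), mul_zero, add_zero,
      Finset.sum_range_succ' _ (S.card + 1), if_pos rfl, mul_zero, add_zero,
      ← Finset.sum_sub_distrib]
    refine Finset.sum_congr rfl fun j hj => ?_
    rw [if_pos (Finset.mem_range.mp hj), if_neg j.succ_ne_zero, Nat.add_sub_cancel, hins (d - j),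
      Nat.cast_succ, ← sub_sub]
    ring

theorem exists_X_pow_eq_sum_hsymmOn {S : Finset σ} {p : σ} (hp : p ∈ S) :
    ∃ M : ℕ → MvPolynomial σ R, ∀ m : ℕ,
      X p ^ m = ∑ j ∈ Finset.range S.card, hsymmOn S (m - j) * M j := by
  obtain ⟨M, hM⟩ := exists_hsymmOn_eq_sum_union (R := R) (S.erase p) (T := {p}) (by simp)
  refine ⟨M, fun m => ?_⟩
  rw [← hsymmOn_singleton, hM, Finset.card_erase_add_one hp, Finset.union_comm,
    ← Finset.insert_eq, Finset.insert_erase hp]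

theorem rename_hsymmOn {e : Perm σ} {S : Finset σ} (he : ∀ p, e p ∈ S ↔ p ∈ S) (d : ℤ) :
    rename e (hsymmOn S d : MvPolynomial σ R) = hsymmOn S d := by
  unfold hsymmOn
  split_ifs
  · rw [map_sum]
    refine Finset.sum_nbij' (Sym.map e) (Sym.map e.symm) ?_ ?_ ?_ ?_ ?_
    · simp only [Finset.mem_sym_iff, Sym.mem_map]
      rintro s hs _ ⟨b, hb, rfl⟩
      exact (he b).mpr (hs b hb)
    · simp only [Finset.mem_sym_iff, Sym.mem_map]
      rintro s hs _ ⟨b, hb, rfl⟩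
      rw [← he, e.apply_symm_apply]
      exact hs b hb
    · simp [Sym.map_map]
    · simp [Sym.map_map]
    · simp [map_multiset_prod]
  · exact map_zero _

theorem hsymmOn_mem_supported (S : Finset σ) (d : ℤ) : hsymmOn S d ∈ supported R (S : Set σ) := by
  unfold hsymmOn
  split_ifs
  · refine Subalgebra.sum_mem _ fun s hs => Subalgebra.multiset_prod_mem _ fun x hx => ?_
    obtain ⟨a, ha, rfl⟩ := Multiset.mem_map.mp hx
    exact Algebra.subset_adjoin ⟨a, Finset.mem_sym_iff.mp hs a ha, rfl⟩
  · exact Subalgebra.zero_mem _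

end CompleteHomogeneous

section Schur

variable {N K : ℕ} (hK : K ≤ N)

/-- The alternant `det (x_p ^ (λ_i + K - i))` in the first `K` of `N` variables. -/
noncomputable def alternant (hK : K ≤ N) (lam : ℕ → ℕ) : MvPolynomial (Fin N) ℤ :=
  (Matrix.of fun p i : Fin K =>
    (X (Fin.castLE hK p) : MvPolynomial (Fin N) ℤ) ^ (lam (i + 1) + (K - 1 - i))).det

theorem hPolyZ_eq_hsymmOn (N K : ℕ) (d : ℤ) :
    hPolyZ N K d = hsymmOn (Finset.univ.filter fun i : Fin N => (i : ℕ) < K) d := rfl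

theorem exists_alternant_eq_schurPoly_mul :
    ∃ f : MvPolynomial (Fin N) ℤ, ∀ lam, alternant hK lam = schurPoly N K lam * f := by
  have hcard : (Finset.univ.filter fun i : Fin N => (i : ℕ) < K).card = K := by
    rw [Fin.card_filter_val_lt, min_eq_right hK]
  choose M hM using fun p : Fin K => exists_X_pow_eq_sum_hsymmOn (R := ℤ)
    (S := Finset.univ.filter fun i : Fin N => (i : ℕ) < K) (p := Fin.castLE hK p) (by simp)
  refine ⟨(Matrix.of fun j p : Fin K => M p (K - 1 - j)).det, fun lam => ?_⟩
  rw [alternant, schurPoly, ← Matrix.det_mul, ← Matrix.det_transpose]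
  refine congrArg _ (Matrix.ext fun i p => ?_)
  rw [Matrix.transpose_apply, Matrix.of_apply, Matrix.mul_apply, hM p, hcard,
    ← Finset.sum_range_reflect, Finset.sum_range]
  refine Finset.sum_congr rfl fun j _ => ?_
  rw [Matrix.of_apply, Matrix.of_apply, hPolyZ_eq_hsymmOn]
  congr 2
  omega

theorem schurPoly_zero (N K : ℕ) : schurPoly N K (fun _ => 0) = 1 := by
  rw [schurPoly, Matrix.det_of_isUpperTriangular]
  · refine Finset.prod_eq_one fun i _ => ?_
    rw [Matrix.of_apply, Nat.cast_zero, zero_add, sub_self]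
    exact hsymmOn_zero _
  · intro i j (hij : (j : ℕ) < i)
    exact hsymmOn_of_neg _ (by simpa using hij)

theorem schurPoly_mul_alternant_zero (lam : ℕ → ℕ) :
    schurPoly N K lam * alternant hK (fun _ => 0) = alternant hK lam := by
  obtain ⟨f, hf⟩ := exists_alternant_eq_schurPoly_mul hK
  rw [hf, hf, schurPoly_zero, one_mul]

theorem rename_schurPoly {e : Perm (Fin N)} (he : ∀ p, (e p : ℕ) < K ↔ (p : ℕ) < K)
    (lam : ℕ → ℕ) : rename e (schurPoly N K lam) = schurPoly N K lam := by
  rw [schurPoly, AlgHom.map_det]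
  refine congrArg _ (Matrix.ext fun i j => ?_)
  exact rename_hsymmOn (fun p => by simp [he]) _

theorem schurPoly_mem_supported (N K : ℕ) (lam : ℕ → ℕ) :
    schurPoly N K lam ∈ supported ℤ {p : Fin N | (p : ℕ) < K} := by
  rw [schurPoly, Matrix.det_apply]
  refine Subalgebra.sum_mem _ fun e _ =>
    Subalgebra.zsmul_mem _ (Subalgebra.prod_mem _ fun i _ => ?_) _
  rw [Matrix.of_apply, hPolyZ_eq_hsymmOn]
  simpa using hsymmOn_mem_supported (R := ℤ) (Finset.univ.filter fun i : Fin N => (i : ℕ) < K)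
    ((lam ((e i : ℕ) + 1) : ℤ) + (i : ℕ) - (e i : ℕ))

theorem apply_eq_zero_of_mem_support_schurPoly {lam : ℕ → ℕ} {s : Fin N →₀ ℕ}
    (hs : s ∈ (schurPoly N K lam).support) {p : Fin N} (hp : K ≤ (p : ℕ)) : s p = 0 := by
  by_contra h
  have hvars : p ∈ (schurPoly N K lam).vars :=
    (mem_vars_iff_mem_support p).mpr ⟨s, hs, Finsupp.mem_support_iff.mpr h⟩
  exact hp.not_gt (mem_supported.mp (schurPoly_mem_supported N K lam) hvars)

end Schur

section Grassmannian

variable {n K : ℕ} {v : Perm (Fin (n + 1))} {p : Fin (n + 1)}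

theorem lehmerCode_eq_val (h : ∀ q < p, v p < v q) : lehmerCode v p = v p := by
  have hset : (Finset.univ.filter fun j => p < j ∧ v j < v p) =
      (Finset.Iio (v p)).map v.symm.toEmbedding := by
    ext j
    simp only [Finset.mem_filter_univ, Finset.mem_map_equiv, symm_symm, Finset.mem_Iio,
      and_iff_right_iff_imp]
    intro hj
    by_contra! hle
    rcases hle.eq_or_lt with rfl | hlt
    · exact lt_irrefl _ hj
    · exact (h j hlt).not_gt hj
  rw [lehmerCode, hset, Finset.card_map, Fin.card_Iio]

theorem lehmerCode_eq_zero (h : ∀ q > p, v p < v q) : lehmerCode v p = 0 := by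
  rw [lehmerCode, Finset.card_eq_zero, Finset.filter_eq_empty_iff]
  exact fun j _ hj => (h j hj.1).not_gt hj.2

theorem isDominant_of_strictAntiOn_of_strictMonoOn (h₁ : StrictAntiOn v {p | (p : ℕ) < K})
    (h₂ : StrictMonoOn v {p | K ≤ (p : ℕ)}) : IsDominant v := by
  intro p q hpq
  rcases lt_or_ge (q : ℕ) K with hq | hq
  · have hp : (p : ℕ) < K := lt_of_le_of_lt hpq hq
    rw [lehmerCode_eq_val fun r hr => h₁ ((Fin.lt_def.mp hr).trans hp) hp hr,
      lehmerCode_eq_val fun r hr => h₁ ((Fin.lt_def.mp hr).trans hq) hq hr]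
    exact h₁.antitoneOn hp hq hpq
  · rw [lehmerCode_eq_zero fun r hr => h₂ hq (hq.trans hr.le) hr]
    exact Nat.zero_le _

theorem val_apply_lt_of_fix {u : Perm (Fin (n + 1))}
    (hu : ∀ p : Fin (n + 1), K ≤ p → u p = p) (hp : (p : ℕ) < K) : (u p : ℕ) < K := by
  by_contra! h
  rw [u.injective (hu (u p) h)] at h
  exact hp.not_ge h

theorem ddiffPerm_inv_schubertPoly (hv : StrictAntiOn v {p | (p : ℕ) < K})
    {u : Perm (Fin (n + 1))} (hu : ∀ p : Fin (n + 1), K ≤ p → u p = p) :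
    ddiffPerm u⁻¹ (schubertPoly (n + 1) v) = schubertPoly (n + 1) (v * u) := by
  induction u, hu using perm_fix_induction with
  | one => rw [inv_one, ddiffPerm_one, mul_one]
  | descent u i hu _ hK hi ih =>
    have hlt : (u i.castSucc : ℕ) < K := val_apply_lt_of_fix hu (by simpa using hK.le)
    have hasc : (u * simpleSwap i) i.castSucc < (u * simpleSwap i) i.succ := by
      simpa only [Perm.mul_apply, simpleSwap_castSucc, simpleSwap_succ] using hi
    have hdesc : (v * (u * simpleSwap i)) i.succ < (v * (u * simpleSwap i)) i.castSucc := by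
      simp only [Perm.mul_apply, simpleSwap_castSucc, simpleSwap_succ]
      exact hv ((Fin.lt_def.mp hi).trans hlt) hlt hi
    have hinv : u⁻¹ = simpleSwap i * (u * simpleSwap i)⁻¹ := by
      rw [mul_inv_rev, ← mul_assoc, simpleSwap_inv, simpleSwap_mul_self, one_mul]
    rw [hinv, ← ddiff_ddiffPerm_of_lt (by simpa only [inv_inv] using hasc), ih,
      ddiff_schubertPoly_of_descent hdesc, mul_assoc, mul_simpleSwap_mul_simpleSwap]

/-- The permutation reversing the first `K` positions, the longest element of the parabolic
subgroup `S_K ⊆ S_N`. -/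
def revFirst {N : ℕ} (hK : K ≤ N) : Perm (Fin N) :=
  Function.Involutive.toPerm
    (fun p => if (p : ℕ) < K then ⟨K - 1 - p, by omega⟩ else p) fun p => by
      ext
      dsimp only
      split_ifs <;> simp_all <;> omega

theorem val_revFirst {N : ℕ} (hK : K ≤ N) (p : Fin N) :
    (revFirst hK p : ℕ) = if (p : ℕ) < K then K - 1 - p else p := by
  change ((if (p : ℕ) < K then _ else _ : Fin N) : ℕ) = _
  split_ifs <;> rfl

theorem revFirst_apply_of_le {N : ℕ} (hK : K ≤ N) {p : Fin N} (hp : K ≤ (p : ℕ)) :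
    revFirst hK p = p :=
  Fin.ext ((val_revFirst hK p).trans (if_neg hp.not_gt))

theorem revFirst_inv {N : ℕ} (hK : K ≤ N) : (revFirst hK)⁻¹ = revFirst hK := rfl

theorem revFirst_mul_self {N : ℕ} (hK : K ≤ N) : revFirst hK * revFirst hK = 1 := by
  nth_rewrite 1 [← revFirst_inv]
  exact inv_mul_cancel _

variable (hK : K ≤ n + 1)

theorem ddiffPerm_revFirst_rename_simpleSwap {i : Fin n} (hi : (i : ℕ) + 1 < K)
    (f : MvPolynomial (Fin (n + 1)) ℤ) :
    ddiffPerm (revFirst hK) (rename (simpleSwap i) f) = -ddiffPerm (revFirst hK) f := by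
  have hsymm : f + rename (simpleSwap i) f =
      ddiff i ((f + rename (simpleSwap i) f) * X i.castSucc) := by
    have hX : ddiff i (X i.castSucc : MvPolynomial (Fin (n + 1)) ℤ) = 1 := by
      rw [ddiff, dividedDiff_X, if_pos rfl, if_neg Fin.castSucc_lt_succ.ne, sub_zero]
    rw [ddiff_mul_of_rename_eq, hX, mul_one]
    rw [map_add, rename_perm_rename_perm, simpleSwap_mul_self, Perm.coe_one, rename_id,
      AlgHom.id_apply]
    exact add_comm _ _
  have hdesc : revFirst hK i.succ < revFirst hK i.castSucc := by
    rw [Fin.lt_def, val_revFirst, val_revFirst, Fin.val_succ, Fin.val_castSucc, if_pos hi,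
      if_pos (by omega)]
    omega
  have h := ddiffPerm_ddiff_of_descent hdesc ((f + rename (simpleSwap i) f) * X i.castSucc)
  rw [← hsymm, map_add] at h
  exact eq_neg_of_add_eq_zero_right h

theorem ddiffPerm_revFirst_rename {u : Perm (Fin (n + 1))}
    (hu : ∀ p : Fin (n + 1), K ≤ p → u p = p) (f : MvPolynomial (Fin (n + 1)) ℤ) :
    ddiffPerm (revFirst hK) (rename u f) = (Perm.sign u : ℤ) • ddiffPerm (revFirst hK) f := by
  induction u, hu using perm_fix_induction generalizing f with
  | one => simp
  | descent u i _ _ hi _ ih =>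
    have h := ih (rename (simpleSwap i) f)
    rw [rename_perm_rename_perm, mul_simpleSwap_mul_simpleSwap,
      ddiffPerm_revFirst_rename_simpleSwap hK hi] at h
    rw [h, Perm.sign_mul, simpleSwap, Perm.sign_swap Fin.castSucc_lt_succ.ne]
    simp

/-- The monomial `∏ x_i ^ (λ_i + K - i)` whose antisymmetrization is the alternant. -/
noncomputable def shiftedMonomial {N : ℕ} (hK : K ≤ N) (lam : ℕ → ℕ) : MvPolynomial (Fin N) ℤ :=
  ∏ i : Fin K, X (Fin.castLE hK i) ^ (lam (i + 1) + (K - 1 - i))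

theorem alternant_eq_sum_rename (lam : ℕ → ℕ) :
    alternant hK lam = ∑ e : Perm (Fin K), (Perm.sign e : ℤ) •
      rename (e.extendDomain (Fin.castLEquiv hK)) (shiftedMonomial hK lam) := by
  rw [alternant, Matrix.det_apply']
  refine Finset.sum_congr rfl fun e _ => ?_
  rw [shiftedMonomial, map_prod, zsmul_eq_mul]
  refine congrArg _ (Finset.prod_congr rfl fun i _ => ?_)
  rw [Matrix.of_apply, map_pow, rename_X]
  exact congrArg (X · ^ _) (Perm.extendDomain_apply_image e (Fin.castLEquiv hK) i).symm

theorem ddiffPerm_revFirst_alternant (lam : ℕ → ℕ) :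
    ddiffPerm (revFirst hK) (alternant hK lam) =
      (K.factorial : ℤ) • ddiffPerm (revFirst hK) (shiftedMonomial hK lam) := by
  have hterm (e : Perm (Fin K)) : ddiffPerm (revFirst hK) ((Perm.sign e : ℤ) •
      rename (e.extendDomain (Fin.castLEquiv hK)) (shiftedMonomial hK lam)) =
        ddiffPerm (revFirst hK) (shiftedMonomial hK lam) := by
    rw [map_zsmul, ddiffPerm_revFirst_rename hK fun p hp =>
      Perm.extendDomain_apply_not_subtype _ _ (by omega), Perm.sign_extendDomain, smul_smul,
      ← Units.val_mul, Int.units_mul_self, Units.val_one, one_smul]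
  rw [alternant_eq_sum_rename, map_sum, Finset.sum_congr rfl fun e _ => hterm e]
  simp [Fintype.card_perm]

theorem strictAntiOn_mul_revFirst {g : Perm (Fin (n + 1))}
    (hg : StrictMonoOn g {p | (p : ℕ) < K}) :
    StrictAntiOn (g * revFirst hK) {p | (p : ℕ) < K} := by
  intro p (hp : (p : ℕ) < K) q (hq : (q : ℕ) < K) hpq
  have hval {r : Fin (n + 1)} (hr : (r : ℕ) < K) : (revFirst hK r : ℕ) = K - 1 - r := by
    rw [val_revFirst, if_pos hr]
  refine hg ?_ ?_ ?_
  · rw [Set.mem_ofPred, hval hq]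
    omega
  · rw [Set.mem_ofPred, hval hp]
    omega
  · rw [Fin.lt_def, hval hp, hval hq]
    omega

theorem shiftedMonomial_eq_schubertPoly {κ : ℕ → ℕ} {g : Perm (Fin (n + 1))}
    (hκ : ∀ p : Fin (n + 1), (p : ℕ) < K → (g p : ℕ) = p + κ (K - p))
    (h₁ : StrictMonoOn g {p | (p : ℕ) < K}) (h₂ : StrictMonoOn g {p | K ≤ (p : ℕ)}) :
    shiftedMonomial hK κ = schubertPoly (n + 1) (g * revFirst hK) := by
  have hanti := strictAntiOn_mul_revFirst hK h₁
  have hmono : StrictMonoOn (g * revFirst hK) {p | K ≤ (p : ℕ)} := fun p hp q hq hpq => by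
    simpa only [Perm.mul_apply, revFirst_apply_of_le hK hp, revFirst_apply_of_le hK hq]
      using h₂ hp hq hpq
  rw [(isDominant_of_strictAntiOn_of_strictMonoOn hanti hmono).schubertPoly_eq]
  refine Finset.prod_of_injOn (Fin.castLE hK) (Fin.castLE_injective hK).injOn
    (fun _ _ => Finset.mem_univ _) (fun p _ hp => ?_) fun i _ => ?_
  · have hpK : K ≤ (p : ℕ) := by
      by_contra! h
      exact hp ⟨⟨p, h⟩, by simp, rfl⟩
    rw [lehmerCode_eq_zero fun q hq => hmono hpK (hpK.trans hq.le) hq, pow_zero]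
  · have hi : revFirst hK (Fin.castLE hK i) = (K - 1 - i : ℕ) := by
      rw [val_revFirst, Fin.val_castLE, if_pos i.2]
    rw [lehmerCode_eq_val fun q hq => hanti ((Fin.lt_def.mp hq).trans i.2) i.2 hq, Perm.mul_apply,
      hκ _ (by omega), hi, show K - (K - 1 - (i : ℕ)) = i + 1 by omega,
      add_comm (κ _)]

theorem ddiffPerm_revFirst_shiftedMonomial {κ : ℕ → ℕ} {g : Perm (Fin (n + 1))}
    (hκ : ∀ p : Fin (n + 1), (p : ℕ) < K → (g p : ℕ) = p + κ (K - p))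
    (h₁ : StrictMonoOn g {p | (p : ℕ) < K}) (h₂ : StrictMonoOn g {p | K ≤ (p : ℕ)}) :
    ddiffPerm (revFirst hK) (shiftedMonomial hK κ) = schubertPoly (n + 1) g := by
  have h := ddiffPerm_inv_schubertPoly (strictAntiOn_mul_revFirst hK h₁)
    fun p hp => revFirst_apply_of_le hK hp
  rwa [revFirst_inv, mul_assoc, revFirst_mul_self, mul_one,
    ← shiftedMonomial_eq_schubertPoly hK hκ h₁ h₂] at h

theorem schubertPoly_eq_schurPoly (hK : K ≤ n + 1) {κ : ℕ → ℕ} {g : Perm (Fin (n + 1))}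
    (hκ : ∀ p : Fin (n + 1), (p : ℕ) < K → (g p : ℕ) = p + κ (K - p))
    (h₁ : StrictMonoOn g {p | (p : ℕ) < K}) (h₂ : StrictMonoOn g {p | K ≤ (p : ℕ)}) :
    schubertPoly (n + 1) g = schurPoly (n + 1) K κ := by
  have hsymm (i : Fin n) (hi : (i : ℕ) + 1 < K) :
      rename (simpleSwap i) (schurPoly (n + 1) K κ) = schurPoly (n + 1) K κ := by
    have hfix (p : Fin (n + 1)) (hp : K ≤ p) : simpleSwap i p = p :=
      simpleSwap_apply_of_lt_or_lt (.inr (hi.trans_le hp))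
    refine rename_schurPoly (fun p => ?_) κ
    rcases lt_or_ge (p : ℕ) K with hp | hp
    · exact iff_of_true (val_apply_lt_of_fix hfix hp) hp
    · rw [hfix p hp]
  have hone : ddiffPerm (revFirst hK) (shiftedMonomial hK fun _ => 0) = 1 :=
    (ddiffPerm_revFirst_shiftedMonomial hK (g := 1) (by simp) (strictMono_id.strictMonoOn _)
      (strictMono_id.strictMonoOn _)).trans (schubertPoly_one n)
  have hκalt := ddiffPerm_revFirst_alternant hK κ
  rw [ddiffPerm_revFirst_shiftedMonomial hK hκ h₁ h₂, ← schurPoly_mul_alternant_zero,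
    ddiffPerm_mul_of_rename_eq (fun p hp => revFirst_apply_of_le hK hp) hsymm,
    ddiffPerm_revFirst_alternant, hone, mul_smul_comm, mul_one] at hκalt
  exact (smul_right_injective _ (Nat.cast_ne_zero.mpr K.factorial_ne_zero) hκalt).symm

end Grassmannian

section GrassmannianShape

variable {n k : ℕ} {nu : ℕ → ℕ} {v : Perm (Fin (n + 1))} {p q : Fin (n + 1)}

theorem IsPartFun.antitoneOn (hnu : IsPartFun k nu) : AntitoneOn nu (Set.Ici 1) :=
  antitoneOn_of_add_one_le Set.ordConnected_Ici fun j _ hj _ => hnu.2.1 j hj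

theorem val_val_add_one (v : Perm (Fin (n + 1))) (p : Fin (n + 1)) :
    val v ((p : ℕ) + 1) = v p + 1 := by
  rw [val, pos_val_add_one]

theorem IsGrassOf.val_apply (hv : IsGrassOf (n + 1) k nu v) (hp : (p : ℕ) < k) :
    (v p : ℕ) = p + nu (k - p) := by
  have h := hv.1 (p + 1) (by omega) hp
  rw [val_val_add_one, Nat.add_sub_add_right] at h
  omega

theorem IsGrassOf.strictMonoOn_lt (hv : IsGrassOf (n + 1) k nu v) (hnu : IsPartFun k nu) :
    StrictMonoOn v {p | (p : ℕ) < k} := by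
  intro p (hp : (p : ℕ) < k) q (hq : (q : ℕ) < k) hpq
  rw [Fin.lt_def] at hpq ⊢
  have h := hnu.antitoneOn (a := k - q) (b := k - p) (Set.mem_Ici.mpr (by omega))
    (Set.mem_Ici.mpr (by omega)) (by omega)
  rw [hv.val_apply hp, hv.val_apply hq]
  omega

theorem IsGrassOf.strictMonoOn_ge (hv : IsGrassOf (n + 1) k nu v) :
    StrictMonoOn v {p | k ≤ (p : ℕ)} := by
  intro p (hp : k ≤ (p : ℕ)) q (hq : k ≤ (q : ℕ)) hpq
  have hmono : StrictMonoOn (val v) (Set.Icc (k + 1) (n + 1)) :=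
    strictMonoOn_of_lt_add_one Set.ordConnected_Icc fun j _ hj hj' => hv.2 j hj.1 hj'.2
  have h := hmono ⟨Nat.succ_le_succ hp, p.2⟩ ⟨Nat.succ_le_succ hq, q.2⟩ (Nat.succ_lt_succ hpq)
  rw [val_val_add_one, val_val_add_one] at h
  exact Nat.lt_of_succ_lt_succ h

theorem IsGrassOf.lt_of_lt_of_apply_lt (hv : IsGrassOf (n + 1) k nu v) (hpq : p < q)
    (h : v q < v p) : (p : ℕ) < k := by
  by_contra! hp
  exact (hv.strictMonoOn_ge hp (hp.trans hpq.le) hpq).not_gt h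

theorem val_eq_add_lehmerCode (h : ∀ q < p, v q < v p) : (v p : ℕ) = p + lehmerCode v p := by
  have hdisj : Disjoint (Finset.Iio p) (Finset.univ.filter fun j => p < j ∧ v j < v p) :=
    Finset.disjoint_left.mpr fun j hj hj' =>
      (Finset.mem_Iio.mp hj).not_gt ((Finset.mem_filter_univ _).mp hj').1
  have hset : (Finset.Iio (v p)).map v.symm.toEmbedding =
      Finset.Iio p ∪ Finset.univ.filter fun j => p < j ∧ v j < v p := by
    ext j
    simp only [Finset.mem_map_equiv, symm_symm, Finset.mem_Iio, Finset.mem_union,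
      Finset.mem_filter_univ]
    rcases lt_trichotomy j p with hj | rfl | hj
    · simp [hj, h j hj]
    · simp
    · simp [hj, hj.not_gt]
  rw [lehmerCode, ← Fin.card_Iio p, ← Finset.card_union_of_disjoint hdisj, ← hset,
    Finset.card_map, Fin.card_Iio]

theorem lt_iff_lt_lehmerCode (h₁ : StrictMonoOn v {p | (p : ℕ) < k})
    (h₂ : StrictMonoOn v {p | k ≤ (p : ℕ)}) (hp : (p : ℕ) < k) (hq : k ≤ (q : ℕ)) :
    v q < v p ↔ (q : ℕ) - k < lehmerCode v p := by
  constructor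
  · intro h
    have hsub : Finset.Icc ⟨k, hq.trans_lt q.2⟩ q ⊆
        Finset.univ.filter fun j => p < j ∧ v j < v p := by
      intro j hj
      obtain ⟨hkj, hjq⟩ := Finset.mem_Icc.mp hj
      exact (Finset.mem_filter_univ _).mpr
        ⟨hp.trans_le hkj, (h₂.monotoneOn hkj hq hjq).trans_lt h⟩
    have hcard := Finset.card_le_card hsub
    rw [Fin.card_Icc] at hcard
    rw [lehmerCode]
    dsimp only at hcard
    omega
  · contrapose!
    intro h
    have hsub : (Finset.univ.filter fun j => p < j ∧ v j < v p) ⊆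
        Finset.Ico ⟨k, hq.trans_lt q.2⟩ q := by
      intro j hj
      obtain ⟨hpj, hvj⟩ := (Finset.mem_filter_univ _).mp hj
      have hkj : k ≤ (j : ℕ) := by
        by_contra! hjk
        exact (h₁ hp hjk hpj).not_gt hvj
      refine Finset.mem_Ico.mpr ⟨hkj, ?_⟩
      by_contra! hqj
      exact ((h₂.monotoneOn hq hkj hqj).trans_lt hvj).not_ge h
    exact (Finset.card_le_card hsub).trans_eq (Fin.card_Ico _ _)

theorem IsGrassOf.lehmerCode_eq (hv : IsGrassOf (n + 1) k nu v) (hnu : IsPartFun k nu)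
    (hp : (p : ℕ) < k) : lehmerCode v p = nu (k - p) := by
  have h := val_eq_add_lehmerCode fun q hq =>
    hv.strictMonoOn_lt hnu ((Fin.lt_def.mp hq).trans hp) hp hq
  rw [hv.val_apply hp] at h
  omega

theorem IsGrassOf.conjPart_eq_lehmerCode_inv (hv : IsGrassOf (n + 1) k nu v)
    (hnu : IsPartFun k nu) (hq : k ≤ (q : ℕ)) :
    conjPart k nu (q - k + 1) = lehmerCode v⁻¹ (v q) := by
  have hiff {p : Fin (n + 1)} (hp : (p : ℕ) < k) : v q < v p ↔ (q : ℕ) - k + 1 ≤ nu (k - p) := by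
    rw [lt_iff_lt_lehmerCode (hv.strictMonoOn_lt hnu) hv.strictMonoOn_ge hp hq,
      hv.lehmerCode_eq hnu hp, Nat.succ_le_iff]
  rw [conjPart, if_neg (Nat.succ_ne_zero _), lehmerCode, ← Finset.card_map v.symm.toEmbedding,
    eq_comm]
  refine Finset.card_bij (fun p _ => k - (p : ℕ)) ?_ ?_ ?_ <;>
    simp only [Finset.mem_map_equiv, symm_symm, Finset.mem_filter_univ, Perm.inv_def,
      symm_apply_apply]
  · rintro p ⟨hvp, hpq⟩
    have hp := hv.lt_of_lt_of_apply_lt hpq hvp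
    exact Finset.mem_filter.mpr ⟨Finset.mem_Icc.mpr (by omega), (hiff hp).mp hvp⟩
  · intro p hp p' hp' h
    have := hv.lt_of_lt_of_apply_lt hp.2 hp.1
    have := hv.lt_of_lt_of_apply_lt hp'.2 hp'.1
    exact Fin.ext (by omega)
  · intro i hi
    obtain ⟨hi, hqi⟩ := Finset.mem_filter.mp hi
    obtain ⟨hi, hik⟩ := Finset.mem_Icc.mp hi
    refine ⟨⟨k - i, by omega⟩, ⟨(hiff (by simp only; omega)).mpr ?_, ?_⟩, ?_⟩
    · rwa [Nat.sub_sub_self hik]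
    · exact Fin.lt_def.mpr (by simp only; omega)
    · exact Nat.sub_sub_self hik

theorem IsGrassOf.val_add_conjPart (hv : IsGrassOf (n + 1) k nu v)
    (hnu : IsPartFun k nu) (hq : k ≤ (q : ℕ)) :
    (v q : ℕ) + conjPart k nu (q - k + 1) = q := by
  have hvq : v⁻¹ (v q) = q := v.symm_apply_apply q
  rw [hv.conjPart_eq_lehmerCode_inv hnu hq, ← val_eq_add_lehmerCode, hvq]
  intro y hy
  rw [hvq]
  by_contra! h
  have hmono := hv.strictMonoOn_ge.monotoneOn hq (hq.trans h) h
  exact hmono.not_gt (hy.trans_eq' (v.apply_symm_apply y).symm)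

theorem schubertPoly_w0_conj_eq_schurPoly (hv : IsGrassOf (n + 1) k nu v) (hnu : IsPartFun k nu) :
    schubertPoly (n + 1) (w0 (n + 1) * v * w0 (n + 1)) =
      schurPoly (n + 1) (n + 1 - k) (conjPart k nu) := by
  refine schubertPoly_eq_schurPoly (Nat.sub_le _ _) (fun p hp => ?_) ?_ ?_
  · have h := hv.val_add_conjPart hnu (q := p.rev) (by rw [Fin.val_rev]; omega)
    rw [Fin.val_rev, show n + 1 - (p + 1) - k + 1 = n + 1 - k - p by omega] at h
    change ((v p.rev).rev : ℕ) = _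
    rw [Fin.val_rev]
    omega
  · intro p (hp : (p : ℕ) < n + 1 - k) q (hq : (q : ℕ) < n + 1 - k) hpq
    refine Fin.rev_lt_rev.mpr (hv.strictMonoOn_ge ?_ ?_ (Fin.rev_lt_rev.mpr hpq)) <;>
      rw [Set.mem_ofPred] <;> simp only [w0, coe_fn_mk, Fin.val_rev] <;> omega
  · intro p (_ : n + 1 - k ≤ (p : ℕ)) q (_ : n + 1 - k ≤ (q : ℕ)) hpq
    refine Fin.rev_lt_rev.mpr (hv.strictMonoOn_lt hnu ?_ ?_ (Fin.rev_lt_rev.mpr hpq)) <;>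
      rw [Set.mem_ofPred] <;> simp only [w0, coe_fn_mk, Fin.val_rev] <;> omega

end GrassmannianShape

section NegRev

variable {n : ℕ} {R : Type*} [CommRing R]

/-- The automorphism `x_p ↦ -x_{n+1-p}`, under which divided differences are conjugated by `w₀`. -/
noncomputable def negRev : MvPolynomial (Fin (n + 1)) R →ₐ[R] MvPolynomial (Fin (n + 1)) R :=
  aeval fun p => -X p.rev

theorem negRev_X (p : Fin (n + 1)) : negRev (X p : MvPolynomial (Fin (n + 1)) R) = -X p.rev :=
  aeval_X _ _

theorem simpleSwap_rev_rev (i : Fin n) (p : Fin (n + 1)) :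
    (simpleSwap i.rev p).rev = simpleSwap i p.rev := by
  rw [simpleSwap, simpleSwap, ← Fin.rev_succ, ← Fin.rev_castSucc, swap_comm i.castSucc]
  exact (Fin.rev_injective.swap_apply _ _ _).symm.trans (by rw [Fin.rev_rev, Fin.rev_rev])

theorem negRev_rename_simpleSwap (i : Fin n) (f : MvPolynomial (Fin (n + 1)) R) :
    negRev (rename (simpleSwap i.rev) f) = rename (simpleSwap i) (negRev f) := by
  have h : (negRev.comp (rename (simpleSwap i.rev)) : MvPolynomial (Fin (n + 1)) R →ₐ[R] _) =
      (rename (simpleSwap i)).comp negRev :=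
    algHom_ext fun p => by
      simp only [AlgHom.comp_apply, rename_X, negRev_X, map_neg, simpleSwap_rev_rev]
  exact DFunLike.congr_fun h f

theorem constantCoeff_negRev (f : MvPolynomial (Fin (n + 1)) R) :
    constantCoeff (negRev f) = constantCoeff f := by
  have h : (constantCoeff.comp (negRev : MvPolynomial (Fin (n + 1)) R →ₐ[R] _).toRingHom) =
      constantCoeff :=
    ringHom_ext (fun r => by simp [negRev]) fun p => by simp [negRev_X]
  exact DFunLike.congr_fun h f

variable [IsDomain R]

theorem ddiff_negRev (i : Fin n) (f : MvPolynomial (Fin (n + 1)) R) :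
    ddiff i (negRev f) = negRev (ddiff i.rev f) := by
  refine dividedDiff_eq_of_mul_eq _ ?_
  have h := congrArg negRev (X_sub_X_mul_dividedDiff (Fin.castSucc_lt_succ (i := i.rev)).ne f)
  rw [map_mul, map_sub, map_sub, negRev_X, negRev_X, Fin.rev_castSucc, Fin.rev_succ, Fin.rev_rev,
    neg_sub_neg] at h
  exact h.trans (congrArg _ (negRev_rename_simpleSwap i f))

theorem ddiffPerm_negRev (u : Perm (Fin (n + 1))) (f : MvPolynomial (Fin (n + 1)) R) :
    ddiffPerm u (negRev f) = negRev (ddiffPerm (w0 (n + 1) * u * w0 (n + 1)) f) := by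
  induction u using perm_descent_induction generalizing f with
  | one => rw [mul_one, w0_mul_w0, ddiffPerm_one, ddiffPerm_one]
  | descent u i hi ih =>
    have hconj : w0 (n + 1) * (u * simpleSwap i) * w0 (n + 1) =
        w0 (n + 1) * u * w0 (n + 1) * simpleSwap i.rev :=
      Perm.ext fun p => congrArg (fun q => w0 (n + 1) (u q)) (simpleSwap_rev_rev i p).symm
    rw [ddiffPerm_of_descent hi, ddiff_negRev, ih, hconj, ← ddiffPerm_of_descent]
    change (u i.rev.succ.rev).rev < (u i.rev.castSucc.rev).rev
    rwa [Fin.rev_succ, Fin.rev_castSucc, Fin.rev_rev, Fin.rev_lt_rev]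

theorem schubertCoeff_negRev (u : Perm (Fin (n + 1))) (f : MvPolynomial (Fin (n + 1)) R) :
    schubertCoeff u (negRev f) = schubertCoeff (w0 (n + 1) * u * w0 (n + 1)) f := by
  rw [schubertCoeff_apply, ddiffPerm_negRev, constantCoeff_negRev, schubertCoeff_apply]

theorem schubertCoeff_mul_schubertPoly (f : MvPolynomial (Fin (n + 1)) ℤ)
    (u v : Perm (Fin (n + 1))) :
    schubertCoeff u (f * schubertPoly (n + 1) v) =
      schubertCoeff u (f * negRev (schubertPoly (n + 1) (w0 (n + 1) * v * w0 (n + 1)))) := by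
  rw [← sub_eq_zero, ← map_sub, ← mul_sub]
  refine schubertCoeff_mul_eq_zero (fun u => ?_) f u
  rw [map_sub, schubertCoeff_negRev, schubertCoeff_schubertPoly, schubertCoeff_schubertPoly,
    sub_eq_zero]
  exact if_congr (by rw [mul_left_inj, mul_right_inj]) rfl rfl

end NegRev

section TranspositionChains

variable {α : Type*} {U : Set α} {a b x : α} {T T' : List (α × α)}

/-- A chain of transpositions `t_{a,b}` with the `a` distinct and outside `U` and the `b` inside. -/
structure IsColumnChain (U : Set α) (T : List (α × α)) : Prop where
  nodup : (T.map Prod.fst).Nodup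
  fst_notMem : ∀ x ∈ T, x.1 ∉ U
  snd_mem : ∀ x ∈ T, x.2 ∈ U

namespace IsColumnChain

theorem notMem_of_mem_map_fst (h : IsColumnChain U T) (hx : x ∈ T.map Prod.fst) : x ∉ U := by
  obtain ⟨y, hy, rfl⟩ := List.mem_map.mp hx
  exact h.fst_notMem y hy

theorem tail {y : α × α} (h : IsColumnChain U (y :: T)) : IsColumnChain U T where
  nodup := (List.nodup_cons.mp h.nodup).2
  fst_notMem z hz := h.fst_notMem z (List.mem_cons_of_mem _ hz)
  snd_mem z hz := h.snd_mem z (List.mem_cons_of_mem _ hz)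

theorem head_notMem (h : IsColumnChain U ((a, b) :: T)) : a ∉ U := h.fst_notMem _ List.mem_cons_self

theorem head_mem (h : IsColumnChain U ((a, b) :: T)) : b ∈ U := h.snd_mem _ List.mem_cons_self

end IsColumnChain

/-- `FirstHit U z x b` says that `b` is the first point of `U` among `z x, z (z x), …`. Applied to
the product `z` of a column chain, it recovers the partner of each `a`, so that the product
determines the pairs of the chain. -/
inductive FirstHit (U : Set α) (z : Perm α) : α → α → Prop
  | base {x : α} (hx : z x ∈ U) : FirstHit U z x (z x)
  | step {x b : α} (hx : z x ∉ U) (h : FirstHit U z (z x) b) : FirstHit U z x b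

theorem FirstHit.unique {z : Perm α} {c : α} (h : FirstHit U z x b) (h' : FirstHit U z x c) :
    b = c := by
  induction h with
  | base hx =>
    cases h' with
    | base => rfl
    | step hx' => exact absurd hx hx'
  | step hx _ ih =>
    cases h' with
    | base hx' => exact absurd hx' hx
    | step _ h' => exact ih h'

variable [DecidableEq α]

/-- The product of the transpositions `t_{a,b}` over the pairs `(a, b)` of a list. The head of the
list is the rightmost factor, so that `List.cons` adds a step to a chain. -/
def chainPerm : List (α × α) → Perm α
  | [] => 1
  | x :: T => chainPerm T * swap x.1 x.2

theorem chainPerm_apply_of_notMem (h₁ : x ∉ T.map Prod.fst) (h₂ : x ∉ T.map Prod.snd) :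
    chainPerm T x = x := by
  induction T with
  | nil => rfl
  | cons y T ih =>
    rw [List.map_cons, List.mem_cons, not_or] at h₁ h₂
    rw [chainPerm, Perm.mul_apply, swap_apply_of_ne_of_ne h₁.1 h₂.1, ih h₁.2 h₂.2]

theorem chainPerm_apply_of_notMem_fst (hT : ∀ y ∈ T, y.2 ∈ U) (hx : x ∉ U)
    (h : x ∉ T.map Prod.fst) : chainPerm T x = x :=
  chainPerm_apply_of_notMem h <| by
    rw [List.mem_map]
    rintro ⟨y, hy, rfl⟩
    exact hx (hT y hy)

theorem chainPerm_cons_apply_left : chainPerm ((a, b) :: T) a = chainPerm T b :=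
  congrArg (chainPerm T) (swap_apply_left a b)

theorem chainPerm_cons_apply_right : chainPerm ((a, b) :: T) b = chainPerm T a :=
  congrArg (chainPerm T) (swap_apply_right a b)

theorem chainPerm_cons_apply_of_ne (ha : x ≠ a) (hb : x ≠ b) :
    chainPerm ((a, b) :: T) x = chainPerm T x :=
  congrArg (chainPerm T) (swap_apply_of_ne_of_ne ha hb)

namespace IsColumnChain

theorem chainPerm_tail_apply (h : IsColumnChain U ((a, b) :: T)) : chainPerm T a = a :=
  chainPerm_apply_of_notMem_fst h.tail.snd_mem h.head_notMem (List.nodup_cons.mp h.nodup).1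

theorem chainPerm_apply_head (h : IsColumnChain U ((a, b) :: T)) :
    chainPerm ((a, b) :: T) b = a := by
  rw [chainPerm_cons_apply_right, h.chainPerm_tail_apply]

theorem chainPerm_apply_ne (h : IsColumnChain U T) (hx : x ∈ T.map Prod.fst) :
    chainPerm T x ≠ x := by
  induction T with
  | nil => exact absurd hx List.not_mem_nil
  | cons y T ih =>
    obtain ⟨a, b⟩ := y
    have hxU := h.notMem_of_mem_map_fst hx
    rcases eq_or_ne x a with rfl | hxa
    · rw [chainPerm_cons_apply_left]
      intro e
      have hbx : b = x := (chainPerm T).injective (e.trans h.chainPerm_tail_apply.symm)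
      exact hxU (hbx ▸ h.head_mem)
    · rw [chainPerm_cons_apply_of_ne hxa (fun hxb => hxU (hxb ▸ h.head_mem))]
      exact ih h.tail ((List.mem_cons.mp hx).resolve_left hxa)

theorem eq_of_map_snd_eq (h : IsColumnChain U T) (h' : IsColumnChain U T')
    (hsnd : T'.map Prod.snd = T.map Prod.snd) (hT : chainPerm T' = chainPerm T) : T' = T := by
  induction T generalizing T' with
  | nil => exact List.map_eq_nil_iff.mp hsnd
  | cons y T ih =>
    obtain ⟨a, b⟩ := y
    cases T' with
    | nil => exact absurd hsnd.symm (List.cons_ne_nil _ _)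
    | cons y' T' =>
    obtain ⟨a', b'⟩ := y'
    obtain ⟨rfl, htail⟩ : b' = b ∧ T'.map Prod.snd = T.map Prod.snd := List.cons.inj hsnd
    obtain rfl : a' = a := by
      rw [← h.chainPerm_apply_head, ← hT, h'.chainPerm_apply_head]
    rw [ih h.tail h'.tail htail (mul_right_cancel hT)]

theorem firstHit_cons (h : IsColumnChain U ((a, b) :: T)) {c : α} (hx : x ∉ U)
    (hc : FirstHit U (chainPerm T) x c) : FirstHit U (chainPerm ((a, b) :: T)) x c := by
  have hne {y : α} (hy : y ∉ U) : y ≠ b := fun e => hy (e ▸ h.head_mem)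
  induction hc with
  | @base x hz =>
    have hxa : x ≠ a := by
      rintro rfl
      exact hx (h.chainPerm_tail_apply ▸ hz)
    rw [← chainPerm_cons_apply_of_ne hxa (hne hx)] at hz ⊢
    exact .base hz
  | @step x c hz _ ih =>
    rcases eq_or_ne x a with rfl | hxa
    · have ih := ih hz
      rwa [h.chainPerm_tail_apply] at ih
    · have ih := ih hz
      rw [← chainPerm_cons_apply_of_ne hxa (hne hx)] at hz ih
      exact .step hz ih

theorem apply_eq_or_mem (h : IsColumnChain U T) (hb : b ∈ U) :
    chainPerm T b = b ∨ (chainPerm T b, b) ∈ T := by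
  induction T with
  | nil => exact .inl rfl
  | cons y T ih =>
    obtain ⟨a, c⟩ := y
    rcases eq_or_ne b c with rfl | hbc
    · rw [h.chainPerm_apply_head]
      exact .inr List.mem_cons_self
    · rw [chainPerm_cons_apply_of_ne (fun hba : b = a => h.head_notMem (hba ▸ hb)) hbc]
      exact (ih h.tail).imp_right (List.mem_cons_of_mem _)

theorem firstHit_of_mem (h : IsColumnChain U T) (hab : (a, b) ∈ T) :
    FirstHit U (chainPerm T) a b := by
  induction T generalizing a b with
  | nil => exact absurd hab List.not_mem_nil
  | cons y T ih =>
    rcases List.mem_cons.mp hab with rfl | hab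
    · have hleft : chainPerm ((a, b) :: T) a = chainPerm T b := chainPerm_cons_apply_left
      rcases h.tail.apply_eq_or_mem h.head_mem with hfix | hmem
      · rw [hfix] at hleft
        have hbase := FirstHit.base (U := U) (z := chainPerm ((a, b) :: T)) (x := a)
        rw [hleft] at hbase
        exact hbase h.head_mem
      · have hz := h.tail.fst_notMem _ hmem
        refine .step (hleft ▸ hz) ?_
        rw [hleft]
        exact h.firstHit_cons hz (ih h.tail hmem)
    · exact h.firstHit_cons (h.tail.fst_notMem _ hab) (ih h.tail hab)

theorem map_fst_perm (h : IsColumnChain U T) (hU : ∀ x ∈ T', x.2 ∈ U)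
    (hlen : T'.length = T.length) (hT : chainPerm T' = chainPerm T) :
    (T.map Prod.fst).Perm (T'.map Prod.fst) := by
  refine (List.subperm_of_subset h.nodup fun x hx => ?_).perm_of_length_le (by simp [hlen])
  by_contra hx'
  have hfix := chainPerm_apply_of_notMem_fst hU (h.notMem_of_mem_map_fst hx) hx'
  exact h.chainPerm_apply_ne hx (hT ▸ hfix)

theorem of_chainPerm_eq (h : IsColumnChain U T) (hU : ∀ x ∈ T', x.2 ∈ U)
    (hlen : T'.length = T.length) (hT : chainPerm T' = chainPerm T) : IsColumnChain U T' where
  nodup := (h.map_fst_perm hU hlen hT).nodup_iff.mp h.nodup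
  fst_notMem _ hx := h.notMem_of_mem_map_fst <|
    (h.map_fst_perm hU hlen hT).mem_iff.mpr (List.mem_map_of_mem hx)
  snd_mem := hU

theorem perm_of_chainPerm_eq (h : IsColumnChain U T) (hU : ∀ x ∈ T', x.2 ∈ U)
    (hlen : T'.length = T.length) (hT : chainPerm T' = chainPerm T) : T.Perm T' := by
  refine (List.subperm_of_subset h.nodup.of_map ?_).perm_of_length_le hlen.le
  rintro ⟨a, b⟩ hab
  have ha : a ∈ T'.map Prod.fst :=
    (h.map_fst_perm hU hlen hT).mem_iff.mp (List.mem_map_of_mem (f := Prod.fst) hab)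
  obtain ⟨⟨a, b'⟩, hab', rfl⟩ := List.mem_map.mp ha
  have hhit := (h.of_chainPerm_eq hU hlen hT).firstHit_of_mem hab'
  rw [hT] at hhit
  rwa [(h.firstHit_of_mem hab).unique hhit]

end IsColumnChain

end TranspositionChains

section ChainCoefficients

variable {n : ℕ} {u w : Perm (Fin (n + 1))} {T : List (Fin (n + 1) × Fin (n + 1))}

/-- Every step of the chain of transpositions `T`, started at `w`, increases the length by one. -/
def IsSaturatedChain (w : Perm (Fin (n + 1))) : List (Fin (n + 1) × Fin (n + 1)) → Prop
  | [] => True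
  | x :: T => x.1 < x.2 ∧ len (w * chainPerm (x :: T)) = len (w * chainPerm T) + 1 ∧
      IsSaturatedChain w T

theorem IsSaturatedChain.len_eq (h : IsSaturatedChain w T) :
    len (w * chainPerm T) = len w + T.length := by
  induction T with
  | nil => rw [chainPerm, mul_one, List.length_nil, add_zero]
  | cons x T ih => rw [h.2.1, ih h.2.2, List.length_cons, add_assoc]

theorem mul_chainPerm_cons_mul_swap (a b : Fin (n + 1)) :
    w * chainPerm ((a, b) :: T) * swap b a = w * chainPerm T := by
  rw [chainPerm, swap_comm, mul_assoc, mul_swap_mul_self]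

theorem schubertCoeff_neg_X_mul (u : Perm (Fin (n + 1))) (b : Fin (n + 1))
    (f : MvPolynomial (Fin (n + 1)) ℤ) :
    schubertCoeff u (-X b * f) = ∑ l, if len (u * swap b l) + 1 = len u then
      -monkSign b l * schubertCoeff (u * swap b l) f else 0 := by
  rw [neg_mul, map_neg, schubertCoeff_X_mul, ← Finset.sum_neg_distrib]
  refine Finset.sum_congr rfl fun l _ => ?_
  rw [neg_ite, neg_zero, smul_eq_mul, neg_mul]

theorem exists_chain_of_schubertCoeff_ne_zero {L : List (Fin (n + 1))}
    (h : schubertCoeff u ((L.map fun b => -X b).prod * schubertPoly (n + 1) w) ≠ 0) :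
    ∃ T : List (Fin (n + 1) × Fin (n + 1)),
      T.map Prod.snd = L ∧ u = w * chainPerm T ∧ len u = len w + L.length := by
  induction L generalizing u with
  | nil =>
    rw [List.map_nil, List.prod_nil, one_mul, schubertCoeff_schubertPoly] at h
    obtain rfl : u = w := of_not_not fun hne => h (if_neg hne)
    exact ⟨[], rfl, (mul_one u).symm, rfl⟩
  | cons b L ih =>
    rw [List.map_cons, List.prod_cons, mul_assoc, schubertCoeff_neg_X_mul] at h
    obtain ⟨l, -, hl⟩ := Finset.exists_ne_zero_of_sum_ne_zero h
    obtain ⟨hlen, hl⟩ := ite_ne_right_iff.mp hl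
    obtain ⟨T, hT, hu, hlen'⟩ := ih (right_ne_zero_of_mul hl)
    refine ⟨(l, b) :: T, by rw [List.map_cons, hT], ?_, by rw [List.length_cons]; omega⟩
    rw [← mul_left_inj (swap b l), hu, mul_chainPerm_cons_mul_swap]

theorem IsSaturatedChain.schubertCoeff_eq_one (h : IsSaturatedChain w T)
    (hT : ∀ T' : List (Fin (n + 1) × Fin (n + 1)), T'.map Prod.snd = T.map Prod.snd →
      chainPerm T' = chainPerm T → T' = T) :
    schubertCoeff (w * chainPerm T)
      (((T.map Prod.snd).map fun b => -X b).prod * schubertPoly (n + 1) w) = 1 := by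
  induction T with
  | nil =>
    rw [List.map_nil, List.map_nil, List.prod_nil, one_mul, schubertCoeff_schubertPoly, chainPerm,
      mul_one, if_pos rfl]
  | cons x T ih =>
    obtain ⟨a, b⟩ := x
    obtain ⟨hab, hlen, h⟩ := h
    have ih := ih h fun T' hsnd hT' =>
      (List.cons.inj (hT ((a, b) :: T') (by simp [hsnd]) (by simp [chainPerm, hT']))).2
    rw [List.map_cons, List.map_cons, List.prod_cons, mul_assoc, schubertCoeff_neg_X_mul,
      Finset.sum_eq_single a]
    · rw [mul_chainPerm_cons_mul_swap, if_pos hlen.symm, ih, monkSign, if_neg hab.not_gt, neg_neg,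
        mul_one]
    · intro l _ hl
      by_contra hne
      obtain ⟨-, hne⟩ := ite_ne_right_iff.mp hne
      obtain ⟨T', hsnd, hT', -⟩ := exists_chain_of_schubertCoeff_ne_zero (right_ne_zero_of_mul hne)
      rw [← mul_chainPerm_cons_mul_swap (T := T') l b, mul_left_inj, mul_right_inj] at hT'
      exact hl (Prod.mk.inj (List.cons.inj (hT ((l, b) :: T') (by simp [hsnd]) hT'.symm)).1).1
    · exact fun ha => absurd (Finset.mem_univ a) ha

theorem IsSaturatedChain.schubertCoeff_prod_neg_X_mul {U : Set (Fin (n + 1))}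
    (h : IsSaturatedChain w T) (hT : IsColumnChain U T) {L : List (Fin (n + 1))}
    (hL : ∀ b ∈ L, b ∈ U) :
    schubertCoeff (w * chainPerm T) ((L.map fun b => -X b).prod * schubertPoly (n + 1) w) =
      if L.Perm (T.map Prod.snd) then 1 else 0 := by
  have hsnd {L : List (Fin (n + 1))} {T' : List (Fin (n + 1) × Fin (n + 1))}
      (hL : ∀ b ∈ L, b ∈ U) (hT' : T'.map Prod.snd = L) : ∀ x ∈ T', x.2 ∈ U :=
    fun x hx => hL _ (hT' ▸ List.mem_map_of_mem hx)
  split_ifs with hperm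
  · rw [(hperm.map _).prod_eq]
    refine h.schubertCoeff_eq_one fun T' hT' hchain => ?_
    have hlen : T'.length = T.length := by simpa using congrArg List.length hT'
    have hU := hsnd (fun b hb => hL b (hperm.mem_iff.mpr hb)) hT'
    exact hT.eq_of_map_snd_eq (hT.of_chainPerm_eq hU hlen hchain) hT' hchain
  · by_contra hne
    obtain ⟨T', rfl, hchain, hlen⟩ := exists_chain_of_schubertCoeff_ne_zero hne
    rw [h.len_eq, List.length_map, Nat.add_right_inj] at hlen
    rw [mul_right_inj] at hchain
    exact hperm ((hT.perm_of_chainPerm_eq (hsnd hL rfl) hlen.symm hchain.symm).map _).symm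

end ChainCoefficients

section SchurExpansion

variable {N K : ℕ} (hK : K ≤ N)

theorem IsPartFun.strictAnti_add_sub {lam : ℕ → ℕ} (h : IsPartFun K lam) :
    StrictAnti fun i : Fin K => lam (i + 1) + (K - 1 - i) := by
  intro i j hij
  have hanti : lam (j + 1) ≤ lam (i + 1) :=
    h.antitoneOn (Nat.le_add_left 1 _) (Nat.le_add_left 1 _)
      (Nat.add_le_add_right (Fin.lt_def.mp hij).le 1)
  dsimp only
  omega

/-- The exponent vector of the term of `alternant hK lam` indexed by the permutation `e`; for
`e = 1` this is `lam` plus the staircase `(K - 1, …, 1, 0)`. -/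
noncomputable def alternantExponent (lam : ℕ → ℕ) (e : Perm (Fin K)) : Fin N →₀ ℕ :=
  Finsupp.mapDomain (fun i => Fin.castLE hK (e i))
    (Finsupp.equivFunOnFinite.symm fun i : Fin K => lam (i + 1) + (K - 1 - i))

theorem alternantExponent_apply (lam : ℕ → ℕ) (e : Perm (Fin K)) (i : Fin K) :
    alternantExponent hK lam e (Fin.castLE hK (e i)) = lam (i + 1) + (K - 1 - i) :=
  Finsupp.mapDomain_apply ((Fin.castLE_injective hK).comp e.injective) _ i

theorem alternantExponent_one_apply (lam : ℕ → ℕ) (i : Fin K) :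
    alternantExponent hK lam 1 (Fin.castLE hK i) = lam (i + 1) + (K - 1 - i) :=
  alternantExponent_apply hK lam 1 i

theorem alternantExponent_apply_of_le (lam : ℕ → ℕ) (e : Perm (Fin K)) {p : Fin N}
    (hp : K ≤ (p : ℕ)) : alternantExponent hK lam e p = 0 :=
  Finsupp.mapDomain_of_notMem_range _ _ fun ⟨i, hi⟩ => hp.not_gt (hi ▸ (e i).isLt)

theorem alternant_eq_sum_monomial (lam : ℕ → ℕ) :
    alternant hK lam =
      ∑ e : Perm (Fin K), (Perm.sign e : ℤ) • monomial (alternantExponent hK lam e) 1 := by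
  rw [alternant, Matrix.det_apply']
  refine Finset.sum_congr rfl fun e _ => ?_
  rw [alternantExponent, ← rename_monomial, monomial_eq, C_1, one_mul,
    Finsupp.prod_fintype _ _ fun _ => pow_zero _, map_prod, zsmul_eq_mul]
  refine congrArg _ (Finset.prod_congr rfl fun i _ => ?_)
  rw [Matrix.of_apply, map_pow, rename_X, Finsupp.equivFunOnFinite_symm_apply_apply]

variable {lam mu : ℕ → ℕ}

theorem IsPartFun.eq_one_of_alternantExponent_eq (hlam : IsPartFun K lam) (hmu : IsPartFun K mu)
    {e : Perm (Fin K)} (h : alternantExponent hK lam e = alternantExponent hK mu 1) : e = 1 := by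
  have hcomp (i : Fin K) : lam (i + 1) + (K - 1 - i) = mu (e i + 1) + (K - 1 - e i) := by
    rw [← alternantExponent_apply hK lam e i, h, alternantExponent_one_apply]
  have hmono : StrictMono e := fun i j hij =>
    hmu.strictAnti_add_sub.lt_iff_gt.mp (by
      simpa only [hcomp] using hlam.strictAnti_add_sub hij)
  exact perm_eq_one_of_forall_le fun _ => hmono.le_apply

theorem IsPartFun.alternantExponent_one_inj (hlam : IsPartFun K lam) (hmu : IsPartFun K mu)
    (h : alternantExponent hK lam 1 = alternantExponent hK mu 1) : lam = mu := by
  funext j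
  rcases j with _ | j
  · rw [hlam.1, hmu.1]
  rcases lt_or_ge j K with hj | hj
  · have := DFunLike.congr_fun h (Fin.castLE hK ⟨j, hj⟩)
    rwa [alternantExponent_one_apply, alternantExponent_one_apply, Nat.add_right_cancel_iff] at this
  · rw [hlam.2.2 _ (Nat.lt_succ_of_le hj), hmu.2.2 _ (Nat.lt_succ_of_le hj)]

theorem IsPartFun.coeff_alternant (hlam : IsPartFun K lam) (hmu : IsPartFun K mu) :
    coeff (alternantExponent hK mu 1) (alternant hK lam) = if lam = mu then 1 else 0 := by
  rw [alternant_eq_sum_monomial, coeff_sum, Finset.sum_eq_single 1]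
  · rw [Perm.sign_one, Units.val_one, one_smul, coeff_monomial]
    exact if_congr ⟨hlam.alternantExponent_one_inj hK hmu, fun h => h ▸ rfl⟩ rfl rfl
  · intro e _ he
    rw [coeff_smul, coeff_monomial,
      if_neg fun h => he (hlam.eq_one_of_alternantExponent_eq hK hmu h), smul_zero]
  · exact fun h => absurd (Finset.mem_univ _) h

theorem IsPartFun.eq_coeff_mul_alternant_zero {cLR : (ℕ → ℕ) → ℤ} {f : MvPolynomial (Fin N) ℤ}
    (hlam : IsPartFun K lam) (hfin : (Function.support cLR).Finite)
    (hsupp : ∀ lam, cLR lam ≠ 0 → IsPartFun K lam)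
    (hf : f = ∑ᶠ lam, cLR lam • schurPoly N K lam) :
    cLR lam = coeff (alternantExponent hK lam 1) (f * alternant hK fun _ => 0) := by
  rw [hf, finsum_eq_sum_of_support_subset (s := hfin.toFinset) _ (by
      rw [hfin.coe_toFinset]
      exact Function.support_smul_subset_left _ _), Finset.sum_mul, coeff_sum,
    Finset.sum_eq_single lam]
  · rw [smul_mul_assoc, schurPoly_mul_alternant_zero, coeff_smul, hlam.coeff_alternant hK hlam,
      if_pos rfl, smul_eq_mul, mul_one]
  · intro kap hkap hne
    rw [smul_mul_assoc, schurPoly_mul_alternant_zero, coeff_smul,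
      (hsupp kap (hfin.mem_toFinset.mp hkap)).coeff_alternant hK hlam, if_neg hne, smul_zero]
  · intro h
    rw [Function.notMem_support.mp (mt hfin.mem_toFinset.mpr h), zero_smul, zero_mul, coeff_zero]

theorem IsPartFun.le_of_alternantExponent_le (hmu : IsPartFun K mu)
    (hlam : ∀ j, 1 ≤ j → lam (j + 1) = mu j) {e : Perm (Fin K)}
    (h : alternantExponent hK mu e ≤ alternantExponent hK lam 1) (i : Fin K) : e i ≤ i := by
  by_contra! hi
  have hle := h (Fin.castLE hK (e i))
  rw [alternantExponent_apply, alternantExponent_one_apply,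
    hlam _ (Nat.one_le_of_lt (Fin.lt_def.mp hi))] at hle
  have hanti : mu (e i) ≤ mu (i + 1) :=
    hmu.antitoneOn (Nat.le_add_left 1 _) (Nat.one_le_of_lt (Fin.lt_def.mp hi))
      (Fin.lt_def.mp hi)
  omega

theorem alternantExponent_one_eq_add {d : Fin N →₀ ℕ}
    (hd : ∀ i : Fin K, lam (i + 1) = mu (i + 1) + d (Fin.castLE hK i))
    (hd₀ : ∀ p : Fin N, K ≤ (p : ℕ) → d p = 0) :
    alternantExponent hK lam 1 = d + alternantExponent hK mu 1 := by
  ext p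
  rw [Finsupp.add_apply]
  rcases lt_or_ge (p : ℕ) K with hp | hp
  · obtain ⟨i, rfl⟩ : ∃ i : Fin K, Fin.castLE hK i = p := ⟨⟨p, hp⟩, rfl⟩
    rw [alternantExponent_one_apply, alternantExponent_one_apply, hd, add_right_comm, add_comm]
  · rw [alternantExponent_apply_of_le hK _ _ hp, alternantExponent_apply_of_le hK _ _ hp, hd₀ p hp]

theorem IsPartFun.coeff_mul_alternant (hmu : IsPartFun K mu)
    (hlam : ∀ j, 1 ≤ j → lam (j + 1) = mu j) {d : Fin N →₀ ℕ}
    (hd : ∀ i : Fin K, lam (i + 1) = mu (i + 1) + d (Fin.castLE hK i))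
    (hd₀ : ∀ p : Fin N, K ≤ (p : ℕ) → d p = 0) (f : MvPolynomial (Fin N) ℤ) :
    coeff (alternantExponent hK lam 1) (f * alternant hK mu) = coeff d f := by
  rw [alternant_eq_sum_monomial, Finset.mul_sum, coeff_sum, Finset.sum_eq_single 1]
  · rw [Perm.sign_one, Units.val_one, one_smul, alternantExponent_one_eq_add hK hd hd₀,
      coeff_mul_monomial, mul_one]
  · intro e _ he
    rw [mul_smul_comm, coeff_smul, coeff_mul_monomial', if_neg, smul_zero]
    refine fun hle => he (inv_eq_one.mp (perm_eq_one_of_forall_le fun i => ?_))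
    simpa using hmu.le_of_alternantExponent_le hK hlam hle (e⁻¹ i)
  · exact fun h => absurd (Finset.mem_univ _) h

theorem littlewoodRichardson_eq_coeff_schurPoly {kap : ℕ → ℕ} {cLR : (ℕ → ℕ) → ℤ}
    (hlam : IsPartFun K lam) (hmu : IsPartFun K mu) (hlm : ∀ j, 1 ≤ j → lam (j + 1) = mu j)
    {d : Fin N →₀ ℕ} (hd : ∀ i : Fin K, lam (i + 1) = mu (i + 1) + d (Fin.castLE hK i))
    (hd₀ : ∀ p : Fin N, K ≤ (p : ℕ) → d p = 0) (hfin : (Function.support cLR).Finite)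
    (hsupp : ∀ lam, cLR lam ≠ 0 → IsPartFun K lam)
    (hLR : schurPoly N K mu * schurPoly N K kap = ∑ᶠ lam, cLR lam • schurPoly N K lam) :
    cLR lam = coeff d (schurPoly N K kap) := by
  rw [hlam.eq_coeff_mul_alternant_zero hK hfin hsupp hLR, mul_right_comm,
    schurPoly_mul_alternant_zero, mul_comm, hmu.coeff_mul_alternant hK hlm hd hd₀]

end SchurExpansion

section ColumnWitness

variable {n k m : ℕ} {w : Perm (Fin (n + 1))} {a b : ℕ → ℕ}

/-- The chain of transpositions whose first `i` steps are given by `a` and `b`, last step first. -/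
def chainList (n : ℕ) (a b : ℕ → ℕ) (i : ℕ) : List (Fin (n + 1) × Fin (n + 1)) :=
  (List.range i).reverse.map fun j => (pos (n + 1) (a j), pos (n + 1) (b j))

theorem chainList_succ (i : ℕ) :
    chainList n a b (i + 1) = (pos (n + 1) (a i), pos (n + 1) (b i)) :: chainList n a b i := by
  rw [chainList, List.range_succ, List.reverse_concat, List.map_cons, chainList]

theorem chainPerm_chainList (i : ℕ) : chainPerm (chainList n a b i) = tProd (n + 1) a b i := by
  induction i with
  | zero => rfl
  | succ i ih =>
    rw [chainList_succ, chainPerm, ih, tProd, tProd, List.range_succ, List.map_append,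
      List.prod_append, List.map_singleton, List.prod_singleton, t]

theorem forall_mem_chainList {p : Fin (n + 1) × Fin (n + 1) → Prop} {i : ℕ} :
    (∀ x ∈ chainList n a b i, p x) ↔ ∀ j < i, p (pos (n + 1) (a j), pos (n + 1) (b j)) := by
  simp [chainList]

theorem coe_pos {j : ℕ} (h₁ : 1 ≤ j) (h₂ : j ≤ n + 1) : (pos (n + 1) j : ℕ) = j - 1 :=
  Nat.mod_eq_of_lt (by omega)

theorem pos_injOn : Set.InjOn (pos (n + 1)) (Set.Icc 1 (n + 1)) := by
  intro i hi j hj h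
  have := congrArg Fin.val h
  rw [coe_pos hi.1 hi.2, coe_pos hj.1 hj.2] at this
  exact Nat.sub_one_cancel hi.1 hj.1 this

theorem StepOK.isColumnChain (h : StepOK (n + 1) k m w a b)
    (ha : ∀ i j, i < m → j < m → i ≠ j → a i ≠ a j) :
    IsColumnChain {p : Fin (n + 1) | k ≤ (p : ℕ)} (chainList n a b m) where
  nodup := by
    rw [chainList, List.map_map]
    refine List.Nodup.map_on (fun i hi j hj hij => ?_) (List.nodup_reverse.mpr List.nodup_range)
    rw [List.mem_reverse, List.mem_range] at hi hj
    have hi' := h.1 i hi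
    have hj' := h.1 j hj
    by_contra hne
    exact ha i j hi hj hne (pos_injOn ⟨hi'.1, by omega⟩ ⟨hj'.1, by omega⟩ hij)
  fst_notMem := forall_mem_chainList.mpr fun j hj => by
    have := h.1 j hj
    rw [Set.mem_ofPred_eq, coe_pos this.1 (by omega)]
    omega
  snd_mem := forall_mem_chainList.mpr fun j hj => by
    have := h.1 j hj
    rw [Set.mem_ofPred_eq, coe_pos (by omega) this.2.2.2]
    omega

theorem StepOK.isSaturatedChain (h : StepOK (n + 1) k m w a b) {i : ℕ} (hi : i ≤ m) :
    IsSaturatedChain w (chainList n a b i) := by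
  induction i with
  | zero => trivial
  | succ i ih =>
    rw [chainList_succ]
    refine ⟨?_, ?_, ih (Nat.le_of_succ_le hi)⟩
    · have := h.1 i hi
      rw [Fin.lt_def, coe_pos (by omega) (by omega), coe_pos (by omega) (by omega)]
      omega
    · rw [← chainList_succ, chainPerm_chainList, chainPerm_chainList, h.2 _ hi,
        h.2 i (Nat.le_of_succ_le hi), add_assoc]

/-- The exponent vector `(d_1, d_2, …)` with `d_j = #{i : b_i = n + 2 - j}`, for the ambient
symmetric group `S_{n + 1}`. -/
noncomputable def columnContent (n m : ℕ) (b : ℕ → ℕ) : Fin (n + 1) →₀ ℕ :=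
  Finsupp.equivFunOnFinite.symm fun p => dJ b m (n + 1) (p + 1)

theorem dJ_eq_zero (hb : ∀ i < m, k < b i) {j : ℕ} (hj : n + 1 - k < j) :
    dJ b m (n + 1) j = 0 := by
  rw [dJ, Finset.card_eq_zero, Finset.filter_eq_empty_iff]
  intro i hi
  have := hb i (Finset.mem_range.mp hi)
  omega

theorem count_map_snd_chainList (hb : ∀ i < m, 1 ≤ b i ∧ b i ≤ n + 1) (p : Fin (n + 1)) :
    ((chainList n a b m).map Prod.snd).count p.rev = dJ b m (n + 1) (p + 1) := by
  induction m with
  | zero => rfl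
  | succ m ih =>
    have hiff : (pos (n + 1) (b m) == p.rev) = true ↔ b m = n + 1 + 1 - ((p : ℕ) + 1) := by
      have := hb m m.lt_succ_self
      rw [beq_iff_eq, Fin.ext_iff, coe_pos this.1 this.2, Fin.val_rev]
      omega
    rw [chainList_succ, List.map_cons, List.count_cons, if_congr hiff rfl rfl,
      ih fun i hi => hb i (Nat.lt_succ_of_lt hi), dJ, dJ, Finset.range_add_one,
      Finset.filter_insert]
    split_ifs
    · rw [Finset.card_insert_of_notMem]
      exact fun hm => Finset.notMem_range_self (Finset.mem_of_mem_filter m hm)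
    · rfl

theorem coe_map_snd_chainList (hb : ∀ i < m, 1 ≤ b i ∧ b i ≤ n + 1) :
    ((chainList n a b m).map Prod.snd : Multiset (Fin (n + 1))) =
      (columnContent n m b).toMultiset.map Fin.rev := by
  ext q
  obtain ⟨p, rfl⟩ := Fin.rev_surjective q
  rw [Multiset.coe_count, count_map_snd_chainList hb, Multiset.count_map_eq_count' _ _
    Fin.rev_injective, Finsupp.count_toMultiset]
  rfl

theorem negRev_prod_map_X (s : Multiset (Fin (n + 1))) :
    negRev ((s.map X).prod : MvPolynomial (Fin (n + 1)) ℤ) =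
      ((s.toList.map Fin.rev).map fun p => -X p).prod := by
  rw [map_multiset_prod, Multiset.map_map, List.map_map, ← Multiset.prod_coe, ← Multiset.map_coe,
    Multiset.coe_toList]
  exact congrArg Multiset.prod (Multiset.map_congr rfl fun p _ => negRev_X p)

theorem StepOK.schubertCoeff_mul_negRev_prod_map_X (h : StepOK (n + 1) k m w a b)
    (ha : ∀ i j, i < m → j < m → i ≠ j → a i ≠ a j) {s : Multiset (Fin (n + 1))}
    (hs : ∀ p ∈ s, (p : ℕ) < n + 1 - k) :
    schubertCoeff (w * tProd (n + 1) a b m) (schubertPoly (n + 1) w * negRev (s.map X).prod) =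
      if s = (columnContent n m b).toMultiset then 1 else 0 := by
  have hU : ∀ p ∈ s.toList.map Fin.rev, p ∈ {p : Fin (n + 1) | k ≤ (p : ℕ)} := by
    intro p hp
    obtain ⟨q, hq, rfl⟩ := List.mem_map.mp hp
    have := hs q (Multiset.mem_toList.mp hq)
    rw [Set.mem_ofPred_eq, Fin.val_rev]
    omega
  have hb : ∀ i < m, 1 ≤ b i ∧ b i ≤ n + 1 := fun i hi => by
    have := h.1 i hi
    omega
  rw [negRev_prod_map_X, mul_comm, ← chainPerm_chainList,
    (h.isSaturatedChain le_rfl).schubertCoeff_prod_neg_X_mul (h.isColumnChain ha) hU]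
  refine if_congr ?_ rfl rfl
  rw [← Multiset.coe_eq_coe, coe_map_snd_chainList hb, ← Multiset.map_coe, Multiset.coe_toList,
    (Multiset.map_injective Fin.rev_injective).eq_iff]

theorem StepOK.schubertCoeff_mul_negRev (h : StepOK (n + 1) k m w a b)
    (ha : ∀ i j, i < m → j < m → i ≠ j → a i ≠ a j) {f : MvPolynomial (Fin (n + 1)) ℤ}
    (hf : ∀ e ∈ f.support, ∀ p : Fin (n + 1), n + 1 - k ≤ (p : ℕ) → e p = 0) :
    schubertCoeff (w * tProd (n + 1) a b m) (schubertPoly (n + 1) w * negRev f) =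
      coeff (columnContent n m b) f := by
  have hterm : ∀ e ∈ f.support, schubertCoeff (w * tProd (n + 1) a b m)
      (schubertPoly (n + 1) w * negRev (coeff e f • (e.toMultiset.map X).prod)) =
        if columnContent n m b = e then coeff e f else 0 := by
    intro e he
    rw [map_smul, mul_smul_comm, map_smul, h.schubertCoeff_mul_negRev_prod_map_X ha, smul_ite,
      smul_zero, smul_eq_mul, mul_one]
    · exact if_congr ((Multiset.toFinsupp.symm.injective.eq_iff).trans eq_comm) rfl rfl
    · intro p hp
      by_contra! hpk
      exact (Finsupp.mem_support_iff.mp ((Finsupp.mem_toMultiset _ _).mp hp)) (hf e he p hpk)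
  conv_lhs => rw [eq_sum_coeff_smul_prod_map_X f, map_sum, Finset.mul_sum, map_sum]
  rw [Finset.sum_congr rfl hterm, Finset.sum_ite_eq]
  exact ite_eq_left_iff.mpr fun hd => (notMem_support_iff.mp hd).symm

theorem lamJ'_eq_add {j : ℕ} (hj : 1 ≤ j) :
    lamJ' b m (n + 1) k j = muJ' b m (n + 1) k j + dJ b m (n + 1) j :=
  if_neg (Nat.ne_of_gt hj)

theorem muJ'_eq_zero {j : ℕ} (hj : n + 1 - k < j) : muJ' b m (n + 1) k j = 0 := by
  rw [muJ', Finset.Icc_eq_empty (by omega), Finset.sum_empty, ite_self]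

theorem lamJ'_succ (hb : ∀ i < m, k < b i) {j : ℕ} (hj : 1 ≤ j) :
    lamJ' b m (n + 1) k (j + 1) = muJ' b m (n + 1) k j := by
  rw [lamJ'_eq_add (Nat.le_add_left 1 j)]
  rcases le_or_gt (j + 1) (n + 1 - k) with hjK | hjK
  · rw [muJ', muJ', if_neg (Nat.succ_ne_zero j), if_neg (Nat.ne_of_gt hj), add_comm,
      ← Finset.add_sum_Ioc_eq_sum_Icc hjK, ← Finset.Icc_add_one_left_eq_Ioc]
  · rw [muJ'_eq_zero hjK, dJ_eq_zero hb hjK, muJ', Finset.Icc_eq_empty hjK.not_ge,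
      Finset.sum_empty, ite_self]

theorem isPartFun_muJ' (hb : ∀ i < m, k < b i) :
    IsPartFun (n + 1 - k) (muJ' b m (n + 1) k) := by
  refine ⟨rfl, fun j hj => ?_, fun j hj => muJ'_eq_zero hj⟩
  rw [← lamJ'_succ hb hj, lamJ'_eq_add (Nat.le_add_left 1 j)]
  exact Nat.le_add_right _ _

theorem isPartFun_lamJ' (hb : ∀ i < m, k < b i) :
    IsPartFun (n + 1 - k) (lamJ' b m (n + 1) k) := by
  refine ⟨rfl, fun j hj => ?_, fun j hj => ?_⟩
  · rw [lamJ'_succ hb hj, lamJ'_eq_add hj]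
    exact Nat.le_add_right _ _
  · rw [lamJ'_eq_add (Nat.one_le_of_lt hj), muJ'_eq_zero hj, dJ_eq_zero hb hj]

end ColumnWitness

/-- If `w →_{c[k,m]} w'`, witnessed by `a`, `b`, then the structure constant
`c^{w'}_{w, w(ν)}` equals the Littlewood–Richardson coefficient `c^{λ'}_{μ',νᵗ}`,
where `d_j = #{i : bᵢ = n+1-j}`, `μ'_j = d_{j+1}+⋯+d_{n-k}` and `λ'_j = μ'_j + d_j`.
The structure constants and Littlewood–Richardson coefficients are encoded by
their defining properties, the latter via the expansion of `s_{μ'} · s_{νᵗ}` in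
Schur polynomials in `x₁,…,x_{n-k}` (here the paper's `n` is `n+1`). -/
theorem structure_constant_eq_LR_column (n k m : ℕ) (hk : 1 ≤ k) (hkn : k ≤ n + 1)
    (hm : 1 ≤ m) (w w' : Equiv.Perm (Fin (n + 1))) (a b : ℕ → ℕ)
    (hstep : StepOK (n + 1) k m w a b) (hw' : w' = w * tProd (n + 1) a b m)
    (ha : ∀ i j, i < m → j < m → i ≠ j → a i ≠ a j)
    (nu : ℕ → ℕ) (hnu : IsPartFun k nu) (hnu1 : nu 1 ≤ n + 1 - k)
    (wnu : Equiv.Perm (Fin (n + 1))) (hwnu : IsGrassOf (n + 1) k nu wnu)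
    (c : Equiv.Perm (Fin (n + 1)) → ℤ)
    (hc : SS (n + 1) w * SS (n + 1) wnu = ∑ u, c u • SS (n + 1) u)
    (cLR : (ℕ → ℕ) → ℤ) (hfin : (Function.support cLR).Finite)
    (hsupp : ∀ lam, cLR lam ≠ 0 → IsPartFun (n + 1 - k) lam)
    (hLR : schurPoly (n + 1) (n + 1 - k) (muJ' b m (n + 1) k) *
        schurPoly (n + 1) (n + 1 - k) (conjPart k nu) =
      ∑ᶠ lam, cLR lam • schurPoly (n + 1) (n + 1 - k) lam) :
    c w' = cLR (lamJ' b m (n + 1) k) := by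
  have hb : ∀ i < m, k < b i := fun i hi => (hstep.1 i hi).2.2.1
  calc c w'
      = schubertCoeff w' (schubertPoly (n + 1) w * schubertPoly (n + 1) wnu) :=
        structure_constant_eq_schubertCoeff hc w'
    _ = schubertCoeff w'
          (schubertPoly (n + 1) w * negRev (schurPoly (n + 1) (n + 1 - k) (conjPart k nu))) := by
        rw [schubertCoeff_mul_schubertPoly, schubertPoly_w0_conj_eq_schurPoly hwnu hnu]
    _ = coeff (columnContent n m b) (schurPoly (n + 1) (n + 1 - k) (conjPart k nu)) := by
        rw [hw']
        exact hstep.schubertCoeff_mul_negRev ha fun e he p hp =>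
          apply_eq_zero_of_mem_support_schurPoly he hp
    _ = cLR (lamJ' b m (n + 1) k) :=
        (littlewoodRichardson_eq_coeff_schurPoly (Nat.sub_le _ _) (isPartFun_lamJ' hb)
          (isPartFun_muJ' hb) (fun _ => lamJ'_succ hb) (fun _ => lamJ'_eq_add (Nat.le_add_left 1 _))
          (fun _ hp => dJ_eq_zero hb (Nat.lt_succ_of_le hp)) hfin hsupp hLR).symm

end SchubertPieri
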